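/- Suppose η = 1 (i.e., lim a_{n+1}/a_n = 1). For any v̂ ∈ (0,1) and any θ ≥ 1/(1 − v̂), the set {ξ : v̂_{b,A}(ξ) = v̂ and v_{b,A}(ξ) = θv̂} has Hausdorff dimension (θ − 1 − θv̂)/((θ − 1)(1 + θv̂)). -/

import Mathlib

/-!
Write `ρ = (θ - 1 - θ * w) / (θ - 1)`; the claimed dimension is `ρ / (1 + θ * w)`.

Upper bound. Call `n` a record for `ξ` if `b ^ a n * ξ` is closer to `ℤ` than every earlier
`b ^ a m * ξ`. A point with exponents `w` and `θ * w` has infinitely many records `n` with distance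
below `b ^ (-a n * u)`, for each `u < θ * w` (`subset_iUnion_piece`). If `m + 1` is a record, the
uniform exponent gives an earlier record `k` with distance below `b ^ (-a m * w')`, where `w' < w`.
This leaves at most about `b ^ (a (m + 1) - a k - w' * a m)` numerators at `m + 1` for each
numerator at `k`, and the asymptotic exponent forces `a k ≥ w' * a m / V`, where `V > θ * w`
(`numer_pred`). As `a (m + 1) / a m → 1`, this recursion shows by strong induction that the number
of numerators at `n` is `O(b ^ (τ * a n))` for every `τ > ρ`, the number `ρ` being the fixed point
of the recursion (`numer_card`). The natural cover then bounds the dimension by `τ / (1 + u)`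
(`dimH_piece_le`, `dimH_upper`).

Lower bound. Choose terms `x k = a (m k)` of the sequence asymptotic to `θ ^ k` up to a shift of the
index, and prescribe zeros on the blocks of places `[x k, y k)` with `y k ≈ (1 + θ * w) * x k`
(`exists_blocks`). At the multiples of a large `M` outside the blocks, `0` and `1` alternate, so
that no other approximation is good; all other digits are free. Every such number has the
prescribed exponents (`exponents_fill`). The map sending the number back to the one formed by its
free digits alone is Hölder continuous, with exponent the lower density of the free places
(`le_dimH_range_fill`): the prescribed digits at the multiples of `M` prevent long carries. That
density is smallest at the ends `y k` of the blocks, where it is close to `ρ / (1 + θ * w)`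
(`count_free_linear`). As this map is onto `[0, 1)`, the exponent bounds the dimension from below.
-/

open Filter MeasureTheory Set

/-- Distance to the nearest integer. -/
noncomputable def dni (x : ℝ) : ℝ := |x - round x|

/-- Asymptotic approximation exponent `v_{b,A}(ξ)` (valued in `EReal`). -/
noncomputable def vbA (b : ℕ) (a : ℕ → ℕ) (ξ : ℝ) : EReal :=
  sSup ((fun v : ℝ => (v : EReal)) ''
    {v : ℝ | 0 ≤ v ∧ ∃ᶠ n in atTop, 1 ≤ n ∧
      dni ((b : ℝ) ^ (a n) * ξ) < (b : ℝ) ^ (-(a n : ℝ) * v)})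

/-- Uniform approximation exponent `v̂_{b,A}(ξ)` (valued in `EReal`). -/
noncomputable def vhatbA (b : ℕ) (a : ℕ → ℕ) (ξ : ℝ) : EReal :=
  sSup ((fun v : ℝ => (v : EReal)) ''
    {v : ℝ | 0 ≤ v ∧ ∀ᶠ N in atTop, ∃ n, 1 ≤ n ∧ n ≤ N ∧
      dni ((b : ℝ) ^ (a n) * ξ) < (b : ℝ) ^ (-(a N : ℝ) * v)})

open scoped NNReal ENNReal

/-! ### Distance to the nearest integer and base `b` expansions -/

lemma dni_nonneg (x : ℝ) : 0 ≤ dni x := abs_nonneg _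

lemma dni_le_abs_sub (x : ℝ) (z : ℤ) : dni x ≤ |x - z| := round_le x z

lemma dni_int_add (z : ℤ) (x : ℝ) : dni (z + x) = dni x := by
  unfold dni
  rw [round_intCast_add]
  congr 1
  push_cast
  ring

lemma le_dni {x c : ℝ} (h1 : c ≤ x) (h2 : x ≤ 1 - c) : c ≤ dni x := by
  unfold dni
  rcases le_or_gt (round x) 0 with h | h
  · have : ((round x : ℤ) : ℝ) ≤ 0 := by exact_mod_cast h
    exact le_trans (by linarith) (le_abs_self _)
  · have : (1 : ℝ) ≤ ((round x : ℤ) : ℝ) := by exact_mod_cast h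
    exact le_trans (by linarith) (neg_le_abs _)

/-- As long as the distance to `ℤ` is small, multiplication by `m` multiplies it by `m`; so an
integer multiple that comes closer to `ℤ` forces `m * dni x` to be at least `1 / 2`. -/
lemma half_le_mul_dni {x : ℝ} {m : ℕ} (hm : 1 ≤ m) (h : dni (m * x) < dni x) :
    1 / 2 ≤ m * dni x := by
  by_contra! hlt
  have hr : round ((m : ℝ) * x) = m * round x := by
    have habs : |(m : ℝ) * x - ((m * round x : ℤ) : ℝ)| < 1 / 2 := by
      have : (m : ℝ) * x - ((m * round x : ℤ) : ℝ) = m * (x - round x) := by push_cast; ring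
      rw [this, abs_mul, Nat.abs_cast]
      exact hlt
    have h2 := abs_sub_round ((m : ℝ) * x)
    have : |((round ((m : ℝ) * x) : ℤ) : ℝ) - ((m * round x : ℤ) : ℝ)| < 1 := by
      rw [abs_lt] at *
      rw [abs_le] at h2
      constructor <;> linarith
    rw [← Int.cast_sub, ← Int.cast_abs] at this
    have h3 : |round ((m : ℝ) * x) - m * round x| < 1 := by exact_mod_cast this
    rw [Int.abs_lt_one_iff] at h3
    linarith
  have : dni (m * x) = m * dni x := by
    unfold dni
    rw [hr, ← Nat.abs_cast m, ← abs_mul, Nat.abs_cast]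
    push_cast
    ring_nf
  have h1 : (1 : ℝ) ≤ m := by exact_mod_cast hm
  nlinarith [dni_nonneg x]

/-- The integer with base `b` expansion `d 0, …, d (n - 1)`. -/
def intPart {b : ℕ} (d : ℕ → Fin b) : ℕ → ℕ
  | 0 => 0
  | n + 1 => b * intPart d n + d n

lemma intPart_succ {b : ℕ} (d : ℕ → Fin b) (n : ℕ) :
    intPart d (n + 1) = b * intPart d n + d n := rfl

lemma pow_mul_ofDigits {b : ℕ} (d : ℕ → Fin b) (n : ℕ) :
    (b : ℝ) ^ n * Real.ofDigits d = intPart d n + Real.ofDigits (fun i => d (i + n)) := by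
  have hb : (b : ℝ) ≠ 0 := by
    have := Fin.pos (d 0)
    positivity
  have key : ∀ n, (b : ℝ) ^ n * ∑ i ∈ Finset.range n, Real.ofDigitsTerm d i = intPart d n := by
    intro n
    induction n with
    | zero => simp [intPart]
    | succ n ih =>
      rw [Finset.sum_range_succ, mul_add, pow_succ', mul_assoc, ih, intPart_succ,
        Real.ofDigitsTerm]
      push_cast
      congr 1
      field_simp
      ring
  rw [Real.ofDigits_eq_sum_add_ofDigits d n, mul_add, key, ← mul_assoc,
    mul_inv_cancel₀ (pow_ne_zero _ hb), one_mul]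

lemma dni_pow_mul_ofDigits {b : ℕ} (d : ℕ → Fin b) (n : ℕ) :
    dni ((b : ℝ) ^ n * Real.ofDigits d) = dni (Real.ofDigits (fun i => d (i + n))) := by
  rw [pow_mul_ofDigits]
  exact_mod_cast dni_int_add (intPart d n : ℤ) _

lemma one_le_intPart {b : ℕ} (d : ℕ → Fin b) {i T : ℕ} (hi : i < T) (h : (d i : ℕ) ≠ 0) :
    1 ≤ intPart d T := by
  have hb := Fin.pos (d 0)
  induction T with
  | zero => omega
  | succ T ih =>
    rw [intPart_succ]
    rcases Nat.lt_succ_iff_lt_or_eq.1 hi with h1 | rfl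
    · have := ih h1
      nlinarith
    · omega

lemma intPart_add_one_le {b : ℕ} (d : ℕ → Fin b) (T : ℕ) : intPart d T + 1 ≤ b ^ T := by
  induction T with
  | zero => simp [intPart]
  | succ T ih =>
    rw [intPart_succ, pow_succ']
    have := (d T).2
    nlinarith

lemma intPart_add_two_le {b : ℕ} (d : ℕ → Fin b) {i T : ℕ} (hi : i < T)
    (h : (d i : ℕ) + 1 < b) : intPart d T + 2 ≤ b ^ T := by
  induction T with
  | zero => omega
  | succ T ih =>
    rw [intPart_succ, pow_succ']
    have := (d T).2
    rcases Nat.lt_succ_iff_lt_or_eq.1 hi with h1 | rfl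
    · have := ih h1
      nlinarith
    · have := intPart_add_one_le d i
      nlinarith

/-- A window of `T` digits that is neither all `0` nor all `b - 1` keeps `b ^ n * ξ` at distance
at least `b ^ (-T)` from the integers. -/
lemma le_dni_ofDigits {b : ℕ} (d : ℕ → Fin b) {n i j T : ℕ} (hi : n ≤ i) (hiT : i < n + T)
    (h0 : (d i : ℕ) ≠ 0) (hj : n ≤ j) (hjT : j < n + T) (h1 : (d j : ℕ) + 1 < b) :
    ((b : ℝ) ^ T)⁻¹ ≤ dni ((b : ℝ) ^ n * Real.ofDigits d) := by
  have hb : (0 : ℝ) < b := by exact_mod_cast Fin.pos (d 0)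
  have hbT : (0 : ℝ) < (b : ℝ) ^ T := by positivity
  rw [dni_pow_mul_ofDigits]
  set e : ℕ → Fin b := fun i => d (i + n) with he
  have e1 : 1 ≤ intPart e T := one_le_intPart e (i := i - n) (by omega)
    (by simpa [he, Nat.sub_add_cancel hi] using h0)
  have e2 : intPart e T + 2 ≤ b ^ T := intPart_add_two_le e (i := j - n) (by omega)
    (by simpa [he, Nat.sub_add_cancel hj] using h1)
  have e1' : (1 : ℝ) ≤ intPart e T := by exact_mod_cast e1
  have e2' : (intPart e T : ℝ) + 2 ≤ (b : ℝ) ^ T := by exact_mod_cast e2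
  have hx := pow_mul_ofDigits e T
  have t0 := Real.ofDigits_nonneg (fun i => e (i + T))
  have t1 := Real.ofDigits_le_one (fun i => e (i + T))
  have hx' : Real.ofDigits e = ((b : ℝ) ^ T)⁻¹ *
      (intPart e T + Real.ofDigits fun i => e (i + T)) := by
    rw [← hx, ← mul_assoc, inv_mul_cancel₀ hbT.ne', one_mul]
  have hinv : 0 < ((b : ℝ) ^ T)⁻¹ := by positivity
  apply le_dni
  · rw [hx']
    nlinarith
  · have : ((b : ℝ) ^ T)⁻¹ * (b : ℝ) ^ T = 1 := inv_mul_cancel₀ hbT.ne'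
    rw [hx']
    nlinarith

lemma dni_ofDigits_le {b : ℕ} (d : ℕ → Fin b) {n T : ℕ}
    (h : ∀ i, n ≤ i → i < n + T → (d i : ℕ) = 0) :
    dni ((b : ℝ) ^ n * Real.ofDigits d) ≤ ((b : ℝ) ^ T)⁻¹ := by
  have hb : (0 : ℝ) < b := by exact_mod_cast Fin.pos (d 0)
  have hb0 : b ≠ 0 := by exact_mod_cast hb.ne'
  have hinv : 0 < ((b : ℝ) ^ T)⁻¹ := by positivity
  rw [dni_pow_mul_ofDigits, Real.ofDigits_eq_sum_add_ofDigits _ T]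
  have hz : ∑ i ∈ Finset.range T, Real.ofDigitsTerm (fun i => d (i + n)) i = 0 := by
    apply Finset.sum_eq_zero
    intro i hi
    rw [Finset.mem_range] at hi
    have := h (i + n) (by omega) (by omega)
    simp [Real.ofDigitsTerm, this]
  rw [hz, zero_add]
  have t0 := Real.ofDigits_nonneg (fun i => (fun i => d (i + n)) (i + T))
  have t1 := Real.ofDigits_le_one (fun i => (fun i => d (i + n)) (i + T))
  refine (dni_le_abs_sub _ 0).trans ?_
  rw [Int.cast_zero, sub_zero, abs_of_nonneg (by positivity)]
  nlinarith

/-- If two expansions differ at `n` and agree at a later place `m`, no carry can bring the two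
numbers closer than `b ^ (-(m + 1))`. -/
lemma le_abs_ofDigits_sub {b : ℕ} (d e : ℕ → Fin b) {n m : ℕ} (hnm : n < m)
    (hn : d n ≠ e n) (hm : d m = e m) :
    ((b : ℝ) ^ (m + 1))⁻¹ ≤ |Real.ofDigits d - Real.ofDigits e| := by
  have hb0 : 0 < b := Fin.pos (d 0)
  have hb : (0 : ℝ) < b := by exact_mod_cast hb0
  have hb2 : 2 ≤ b := by
    by_contra hlt
    apply hn
    ext
    have := (d n).2
    have := (e n).2
    omega
  -- the integer parts differ from `n + 1` on
  have hne : ∀ k, n < k → intPart d k ≠ intPart e k := by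
    intro k hk
    induction k with
    | zero => omega
    | succ k ih =>
      rw [intPart_succ, intPart_succ]
      intro heq
      have hmod : (d k : ℕ) = e k := by
        have := congrArg (· % b) heq
        simpa [Nat.add_mod, Nat.mod_eq_of_lt (d k).2, Nat.mod_eq_of_lt (e k).2] using this
      rcases Nat.lt_succ_iff_lt_or_eq.1 hk with h1 | rfl
      · refine ih h1 ?_
        rw [hmod] at heq
        exact Nat.eq_of_mul_eq_mul_left hb0 (by omega)
      · exact hn (Fin.ext hmod)
  have hge : (b : ℤ) ≤ |(intPart d (m + 1) : ℤ) - intPart e (m + 1)| := by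
    have h1 : (intPart d (m + 1) : ℤ) - intPart e (m + 1) =
        b * ((intPart d m : ℤ) - intPart e m) := by
      rw [intPart_succ, intPart_succ, hm]
      push_cast
      ring
    rw [h1, abs_mul, Nat.abs_cast]
    have h2 : (1 : ℤ) ≤ |(intPart d m : ℤ) - intPart e m| := by
      apply Int.one_le_abs
      have := hne m hnm
      omega
    nlinarith
  have hge' : (2 : ℝ) ≤ |(intPart d (m + 1) : ℝ) - intPart e (m + 1)| := by
    have : (2 : ℤ) ≤ |(intPart d (m + 1) : ℤ) - intPart e (m + 1)| := by omega
    exact_mod_cast this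
  have t0 := Real.ofDigits_nonneg (fun i => d (i + (m + 1)))
  have t1 := Real.ofDigits_le_one (fun i => d (i + (m + 1)))
  have u0 := Real.ofDigits_nonneg (fun i => e (i + (m + 1)))
  have u1 := Real.ofDigits_le_one (fun i => e (i + (m + 1)))
  have hx := pow_mul_ofDigits d (m + 1)
  have hy := pow_mul_ofDigits e (m + 1)
  have hB : (0 : ℝ) < (b : ℝ) ^ (m + 1) := by positivity
  rw [inv_le_iff_one_le_mul₀' hB]
  have : (b : ℝ) ^ (m + 1) * |Real.ofDigits d - Real.ofDigits e| =
      |(b : ℝ) ^ (m + 1) * Real.ofDigits d - (b : ℝ) ^ (m + 1) * Real.ofDigits e| := by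
    rw [← mul_sub, abs_mul, abs_of_pos hB]
  rw [this, hx, hy]
  set X := (intPart d (m + 1) : ℝ) - intPart e (m + 1)
  have h3 : |X| - 1 ≤ |X + (Real.ofDigits (fun i => d (i + (m + 1))) -
      Real.ofDigits (fun i => e (i + (m + 1))))| := by
    have : |Real.ofDigits (fun i => d (i + (m + 1))) -
      Real.ofDigits (fun i => e (i + (m + 1)))| ≤ 1 := by
      rw [abs_le]; constructor <;> linarith
    have := abs_sub_abs_le_abs_add X (Real.ofDigits (fun i => d (i + (m + 1))) -
      Real.ofDigits (fun i => e (i + (m + 1))))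
    linarith
  refine le_trans (by linarith : (1 : ℝ) ≤ |X| - 1) (h3.trans (le_of_eq ?_))
  congr 1
  simp only [X]
  ring

/-! ### Records and the number of their numerators -/

lemma dni_mul_le (x : ℝ) (m : ℕ) : dni (m * x) ≤ m * dni x := by
  refine (dni_le_abs_sub _ (m * round x)).trans (le_of_eq ?_)
  unfold dni
  rw [← Nat.abs_cast m, ← abs_mul, Nat.abs_cast]
  push_cast
  ring_nf

/-- `n` is a record for `ξ`: `b ^ a n * ξ` is closer to the integers than all earlier
`b ^ a m * ξ`. -/
def IsRec (b : ℕ) (a : ℕ → ℕ) (ξ : ℝ) (n : ℕ) : Prop :=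
  1 ≤ n ∧ ∀ m, 1 ≤ m → m < n → dni ((b : ℝ) ^ (a n) * ξ) < dni ((b : ℝ) ^ (a m) * ξ)

/-- The points of `[z, z + 1)` for which the exponents `w'` (uniform, from below) and `V`
(asymptotic, from above) are effective from the index `N₀` on, with the finitely many earlier
distances bounded below by `b ^ (-R)`. -/
def piece (b : ℕ) (a : ℕ → ℕ) (w' V : ℝ) (z : ℤ) (N₀ R : ℕ) : Set ℝ :=
  {ξ | ξ ∈ Ico (z : ℝ) (z + 1) ∧
    (∀ N, N₀ ≤ N → ∃ n, 1 ≤ n ∧ n ≤ N ∧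
      dni ((b : ℝ) ^ (a n) * ξ) < (b : ℝ) ^ (-(a N : ℝ) * w')) ∧
    (∀ n, N₀ ≤ n → (b : ℝ) ^ (-(a n : ℝ) * V) ≤ dni ((b : ℝ) ^ (a n) * ξ)) ∧
    ∀ n, 1 ≤ n → n < N₀ → (b : ℝ) ^ (-(R : ℝ)) ≤ dni ((b : ℝ) ^ (a n) * ξ)}

/-- The numerators `p` of the approximations `p / b ^ a n` to points of `piece` having a record
at `n`. -/
def numer (b : ℕ) (a : ℕ → ℕ) (w' V : ℝ) (z : ℤ) (N₀ R n : ℕ) : Set ℤ :=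
  {p | ∃ ξ ∈ piece b a w' V z N₀ R, IsRec b a ξ n ∧ p = round ((b : ℝ) ^ (a n) * ξ)}

lemma numer_finite (b : ℕ) (hb : 2 ≤ b) (a : ℕ → ℕ) (w' V : ℝ) (z : ℤ) (N₀ R n : ℕ) :
    (numer b a w' V z N₀ R n).Finite := by
  apply (Set.finite_Icc (z * (b : ℤ) ^ (a n)) ((z + 1) * (b : ℤ) ^ (a n))).subset
  rintro p ⟨ξ, ⟨⟨h0, h1⟩, -⟩, -, rfl⟩
  have hB : (0 : ℝ) < (b : ℝ) ^ (a n) := by positivity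
  have hr := abs_le.1 (abs_sub_round ((b : ℝ) ^ (a n) * ξ))
  have k1 : ((z * (b : ℤ) ^ (a n) : ℤ) : ℝ) < (round ((b : ℝ) ^ (a n) * ξ) : ℤ) + 1 := by
    push_cast; nlinarith
  have k2 : ((round ((b : ℝ) ^ (a n) * ξ) : ℤ) : ℝ) < ((z + 1) * (b : ℤ) ^ (a n) : ℤ) + 1 := by
    push_cast; nlinarith
  have k1' : z * (b : ℤ) ^ (a n) < round ((b : ℝ) ^ (a n) * ξ) + 1 := by exact_mod_cast k1
  have k2' : round ((b : ℝ) ^ (a n) * ξ) < (z + 1) * (b : ℤ) ^ (a n) + 1 := by exact_mod_cast k2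
  constructor <;> omega

/-- Every record at `m + 1` comes from an earlier record `k`: the uniform exponent provides an
approximation good enough to leave few numerators at `m + 1`, the asymptotic exponent keeps `a k`
from being small, and the record property keeps the number of choices from being below `1`. -/
lemma numer_pred (b : ℕ) (hb : 2 ≤ b) (a : ℕ → ℕ) (ha : StrictMono a) (w' V : ℝ) (z : ℤ)
    (N₀ R m : ℕ) (hm : N₀ ≤ m) (hmR : (R : ℝ) < a m * w')
    (p : ℤ) (hp : p ∈ numer b a w' V z N₀ R (m + 1)) :
    ∃ k, k < m + 1 ∧ w' * a m ≤ a k * V ∧ ∃ p' ∈ numer b a w' V z N₀ R k,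
      1 / 2 ≤ (b : ℝ) ^ ((a (m + 1) : ℝ) - a k - w' * a m) ∧
      |(p : ℝ) - p' * (b : ℝ) ^ (a (m + 1) - a k)| ≤
        (b : ℝ) ^ ((a (m + 1) : ℝ) - a k - w' * a m) + 1 / 2 := by
  classical
  have hb1 : (1 : ℝ) < b := by exact_mod_cast (by omega : 1 < b)
  have hb0 : (0 : ℝ) < b := by linarith
  obtain ⟨ξ, hξ, ⟨-, hrec⟩, rfl⟩ := hp
  obtain ⟨hI, hu, hV, hR⟩ := id hξ
  have hex := hu m hm
  -- the first index realising the uniform bound is a record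
  obtain ⟨h1, hkm, hk⟩ := Nat.find_spec hex
  have hmin : ∀ j, j < Nat.find hex → _ := fun j hj => Nat.find_min hex hj
  set k := Nat.find hex with hkdef
  have hkrec : IsRec b a ξ k := by
    refine ⟨h1, fun j hj1 hjk => ?_⟩
    have := hmin j hjk
    simp only [not_and, not_lt] at this
    exact lt_of_lt_of_le hk (this hj1 (by omega))
  have hkN : N₀ ≤ k := by
    by_contra! hlt
    have h2 := (hR k h1 hlt).trans_lt hk
    rw [Real.rpow_lt_rpow_left_iff hb1] at h2
    linarith
  have hak : a k ≤ a (m + 1) := ha.monotone (by omega)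
  have hpow : (b : ℝ) ^ (a (m + 1)) = (b : ℝ) ^ (a (m + 1) - a k) * (b : ℝ) ^ (a k) := by
    rw [← pow_add, Nat.sub_add_cancel hak]
  have hsplit : (b : ℝ) ^ ((a (m + 1) : ℝ) - a k - w' * a m) =
      (b : ℝ) ^ (a (m + 1) - a k) * (b : ℝ) ^ (-(a m : ℝ) * w') := by
    rw [← Real.rpow_natCast, ← Real.rpow_add hb0, Nat.cast_sub hak]
    ring_nf
  have hB : (0 : ℝ) < (b : ℝ) ^ (a (m + 1) - a k) := by positivity
  refine ⟨k, by omega, ?_, round ((b : ℝ) ^ (a k) * ξ), ⟨ξ, hξ, hkrec, rfl⟩, ?_, ?_⟩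
  · have h2 := (hV k hkN).trans_lt hk
    rw [Real.rpow_lt_rpow_left_iff hb1] at h2
    linarith
  · have h3 := half_le_mul_dni (x := (b : ℝ) ^ (a k) * ξ) (m := b ^ (a (m + 1) - a k))
      (Nat.one_le_pow _ _ (by omega)) (by
        push_cast
        rw [← mul_assoc, ← hpow]
        exact hrec k h1 (by omega))
    push_cast at h3
    rw [hsplit]
    nlinarith
  · rw [hsplit]
    have e1 := abs_sub_round ((b : ℝ) ^ (a (m + 1)) * ξ)
    have e2 : |(b : ℝ) ^ (a k) * ξ - round ((b : ℝ) ^ (a k) * ξ)| ≤ (b : ℝ) ^ (-(a m : ℝ) * w') :=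
      hk.le
    have e3 : |(b : ℝ) ^ (a (m + 1)) * ξ -
        round ((b : ℝ) ^ (a k) * ξ) * (b : ℝ) ^ (a (m + 1) - a k)| ≤
        (b : ℝ) ^ (a (m + 1) - a k) * (b : ℝ) ^ (-(a m : ℝ) * w') := by
      have : (b : ℝ) ^ (a (m + 1)) * ξ -
        round ((b : ℝ) ^ (a k) * ξ) * (b : ℝ) ^ (a (m + 1) - a k) =
        (b : ℝ) ^ (a (m + 1) - a k) * ((b : ℝ) ^ (a k) * ξ - round ((b : ℝ) ^ (a k) * ξ)) := by
        rw [hpow]; ring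
      rw [this, abs_mul, abs_of_pos hB]
      gcongr
    rw [abs_le] at *
    constructor <;> linarith [e1.1, e1.2, e3.1, e3.2]

lemma card_near_le (c : ℤ) (x : ℝ) (hx : 1 / 2 ≤ x) (S : Finset ℤ)
    (hS : ∀ p ∈ S, |(p : ℝ) - c| ≤ x + 1 / 2) : (S.card : ℝ) ≤ 6 * x := by
  have hsub : S ⊆ Finset.Icc (c - ⌊x + 1 / 2⌋) (c + ⌊x + 1 / 2⌋) := by
    intro p hp
    have := hS p hp
    have h2 : |p - c| ≤ ⌊x + 1 / 2⌋ := by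
      rw [Int.le_floor]; push_cast; exact this
    rw [abs_le] at h2
    rw [Finset.mem_Icc]
    omega
  have h1 := Finset.card_le_card hsub
  rw [Int.card_Icc] at h1
  have h0 : 0 ≤ ⌊x + 1 / 2⌋ := Int.floor_nonneg.2 (by linarith)
  have h2 : (S.card : ℤ) ≤ 2 * ⌊x + 1 / 2⌋ + 1 := by omega
  have h3 : (S.card : ℝ) ≤ 2 * ((⌊x + 1 / 2⌋ : ℤ) : ℝ) + 1 := by exact_mod_cast h2
  have := Int.floor_le (x + 1 / 2)
  linarith

/-- Strong induction along `numer_pred`: the number of numerators at `n` is `O(b ^ (τ * a n))` for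
every `τ` above the fixed point of the recursion. -/
lemma numer_card (b : ℕ) (hb : 2 ≤ b) (a : ℕ → ℕ) (ha : StrictMono a) (w' V τ ρ : ℝ)
    (hw' : 0 < w') (hV : 0 < V) (hτ : τ < 1)
    (hρ : ∀ᶠ n in atTop, ρ * (a (n + 1) : ℝ) ≤ a n)
    (hfix : 1 - ρ * (w' * (1 + (1 - τ) / V)) < τ) (z : ℤ) (N₀ R : ℕ) :
    ∃ K : ℝ, 0 ≤ K ∧
      ∀ n, ((numer b a w' V z N₀ R n).ncard : ℝ) ≤ K * (b : ℝ) ^ (τ * (a n : ℝ)) := by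
  classical
  have hb1 : (1 : ℝ) < b := by exact_mod_cast (by omega : 1 < b)
  have hb0 : (0 : ℝ) < b := by linarith
  have haT : Tendsto (fun n => (a n : ℝ)) atTop atTop :=
    tendsto_natCast_atTop_atTop.comp ha.tendsto_atTop
  set κ := w' * (1 + (1 - τ) / V) with hκ
  have hκ0 : 0 < κ := by
    have : 0 < (1 - τ) / V := div_pos (by linarith) hV
    positivity
  set η := τ - (1 - ρ * κ) with hη
  have hη0 : 0 < η := by linarith
  have hgrow : ∀ᶠ n : ℕ in atTop, 6 * (a n : ℝ) ≤ (b : ℝ) ^ (η * (a n : ℝ)) := by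
    have h1 : Tendsto (fun x : ℝ => x ^ (1 : ℝ) * Real.exp (-(η * Real.log b) * x)) atTop
        (nhds 0) :=
      tendsto_rpow_mul_exp_neg_mul_atTop_nhds_zero 1 _ (mul_pos hη0 (Real.log_pos hb1))
    have h2 := (h1.comp haT).eventually (gt_mem_nhds (by norm_num : (0 : ℝ) < 1 / 6))
    filter_upwards [h2] with n hn
    simp only [Function.comp, Real.rpow_one] at hn
    have hE : (b : ℝ) ^ (η * (a n : ℝ)) = Real.exp (η * Real.log b * a n) := by
      rw [Real.rpow_def_of_pos hb0]; ring_nf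
    rw [hE]
    have h3 : Real.exp (-(η * Real.log b) * a n) * Real.exp (η * Real.log b * a n) = 1 := by
      rw [← Real.exp_add]; simp
    have h4 := Real.exp_pos (η * Real.log b * a n)
    have h5 : (a n : ℝ) = (a n * Real.exp (-(η * Real.log b) * a n)) *
        Real.exp (η * Real.log b * a n) := by
      rw [mul_assoc, h3, mul_one]
    nlinarith
  have hall : ∀ᶠ m in atTop, N₀ ≤ m ∧ (R : ℝ) < a m * w' ∧ ρ * (a (m + 1) : ℝ) ≤ a m ∧
      6 * (a (m + 1) : ℝ) ≤ (b : ℝ) ^ (η * (a (m + 1) : ℝ)) :=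
    (eventually_ge_atTop N₀).and (((haT.atTop_mul_const hw').eventually_gt_atTop _).and
      (hρ.and ((tendsto_add_atTop_nat 1).eventually hgrow)))
  obtain ⟨N₁, hN₁⟩ := eventually_atTop.1 hall
  -- the constant only has to take care of the finitely many `n ≤ N₁`
  set K : ℝ := ∑ n ∈ Finset.range (N₁ + 1),
    ((numer b a w' V z N₀ R n).ncard : ℝ) * (b : ℝ) ^ (-(τ * (a n : ℝ))) with hK
  have hK0 : 0 ≤ K := Finset.sum_nonneg fun n _ => by positivity
  refine ⟨K, hK0, fun n => ?_⟩
  induction n using Nat.strong_induction_on with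
  | _ n ih =>
  by_cases hn : n < N₁ + 1
  · have h1 : ((numer b a w' V z N₀ R n).ncard : ℝ) * (b : ℝ) ^ (-(τ * (a n : ℝ))) ≤ K :=
      Finset.single_le_sum (f := fun n => ((numer b a w' V z N₀ R n).ncard : ℝ) *
        (b : ℝ) ^ (-(τ * (a n : ℝ)))) (fun n _ => by positivity) (Finset.mem_range.2 hn)
    rw [Real.rpow_neg hb0.le, ← div_eq_mul_inv, div_le_iff₀ (by positivity)] at h1
    exact h1
  obtain ⟨m, rfl⟩ : ∃ m, n = m + 1 := ⟨n - 1, by omega⟩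
  obtain ⟨hmN, hmR, hmρ, hmg⟩ := hN₁ m (by omega)
  set F : ℕ → Finset ℤ := fun k => (numer_finite b hb a w' V z N₀ R k).toFinset with hF
  have hFc : ∀ k, ((numer b a w' V z N₀ R k).ncard) = (F k).card := fun k =>
    Set.ncard_eq_toFinset_card _ _
  simp only [hFc] at ih ⊢
  set e : ℕ → ℝ := fun k => (a (m + 1) : ℝ) - a k - w' * a m with he
  set I := (Finset.range (m + 1)).filter
    (fun k => w' * a m ≤ a k * V ∧ 1 / 2 ≤ (b : ℝ) ^ (e k)) with hI
  have hsub : F (m + 1) ⊆ I.biUnion fun k => (F k).biUnion fun p' =>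
      (F (m + 1)).filter fun p : ℤ =>
        |(p : ℝ) - (p' * (b : ℤ) ^ (a (m + 1) - a k) : ℤ)| ≤ (b : ℝ) ^ (e k) + 1 / 2 := by
    intro p hp
    obtain ⟨k, hk, hkV, p', hp', h12, hd⟩ := numer_pred b hb a ha w' V z N₀ R m hmN hmR p
      (by simpa [hF] using hp)
    simp only [Finset.mem_biUnion, Finset.mem_filter]
    refine ⟨k, ?_, p', by simpa [hF] using hp', hp, ?_⟩
    · simp only [hI, Finset.mem_filter, Finset.mem_range]
      exact ⟨hk, hkV, h12⟩
    · push_cast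
      exact hd
  have hterm : ∀ k ∈ I, (((F k).biUnion fun p' => (F (m + 1)).filter fun p : ℤ =>
        |(p : ℝ) - (p' * (b : ℤ) ^ (a (m + 1) - a k) : ℤ)| ≤ (b : ℝ) ^ (e k) + 1 / 2).card : ℝ)
      ≤ 6 * K * (b : ℝ) ^ ((1 - ρ * κ) * (a (m + 1) : ℝ)) := by
    intro k hk
    simp only [hI, Finset.mem_filter, Finset.mem_range] at hk
    obtain ⟨hkm, hkV, h12⟩ := hk
    have c1 : (((F k).biUnion fun p' => (F (m + 1)).filter fun p : ℤ =>
        |(p : ℝ) - (p' * (b : ℤ) ^ (a (m + 1) - a k) : ℤ)| ≤ (b : ℝ) ^ (e k) + 1 / 2).card : ℝ)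
        ≤ ∑ p' ∈ F k, 6 * (b : ℝ) ^ (e k) := by
      refine le_trans (Nat.cast_le.2 Finset.card_biUnion_le) ?_
      rw [Nat.cast_sum]
      refine Finset.sum_le_sum fun p' _ => ?_
      exact card_near_le _ _ h12 _ fun p hp => (Finset.mem_filter.1 hp).2
    have c2 := ih k hkm
    rw [Finset.sum_const, nsmul_eq_mul] at c1
    have hpe : 0 < (b : ℝ) ^ (e k) := by positivity
    have c3 : (b : ℝ) ^ (τ * (a k : ℝ)) * (b : ℝ) ^ (e k) ≤
        (b : ℝ) ^ ((1 - ρ * κ) * (a (m + 1) : ℝ)) := by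
      rw [← Real.rpow_add hb0]
      apply Real.rpow_le_rpow_of_exponent_le hb1.le
      have hk1 : (1 - τ) * (w' * a m / V) ≤ (1 - τ) * a k :=
        mul_le_mul_of_nonneg_left ((div_le_iff₀ hV).2 hkV) (by linarith)
      have hk2 : κ * (ρ * (a (m + 1) : ℝ)) ≤ κ * a m := mul_le_mul_of_nonneg_left hmρ hκ0.le
      have hk3 : κ * a m = w' * a m + (1 - τ) * (w' * a m / V) := by
        rw [hκ]; field_simp
      simp only [he]
      nlinarith
    calc _ ≤ _ := c1
      _ ≤ (K * (b : ℝ) ^ (τ * (a k : ℝ))) * (6 * (b : ℝ) ^ (e k)) := by gcongr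
      _ = 6 * K * ((b : ℝ) ^ (τ * (a k : ℝ)) * (b : ℝ) ^ (e k)) := by ring
      _ ≤ _ := by gcongr
  have hIc : (I.card : ℝ) ≤ a (m + 1) := by
    have h1 : I.card ≤ m + 1 := by
      rw [hI]
      exact (Finset.card_filter_le _ _).trans (Finset.card_range _).le
    exact_mod_cast h1.trans (ha.le_apply)
  calc ((F (m + 1)).card : ℝ) ≤ _ := Nat.cast_le.2 (Finset.card_le_card hsub)
    _ ≤ _ := Nat.cast_le.2 Finset.card_biUnion_le
    _ ≤ ∑ k ∈ I, 6 * K * (b : ℝ) ^ ((1 - ρ * κ) * (a (m + 1) : ℝ)) := by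
        rw [Nat.cast_sum]
        exact Finset.sum_le_sum hterm
    _ = K * ((6 * (I.card : ℝ)) * (b : ℝ) ^ ((1 - ρ * κ) * (a (m + 1) : ℝ))) := by
        rw [Finset.sum_const, nsmul_eq_mul]; ring
    _ ≤ K * ((b : ℝ) ^ (η * (a (m + 1) : ℝ)) * (b : ℝ) ^ ((1 - ρ * κ) * (a (m + 1) : ℝ))) := by
        gcongr
        exact le_trans (by linarith) hmg
    _ = K * (b : ℝ) ^ (τ * (a (m + 1) : ℝ)) := by
        rw [← Real.rpow_add hb0, hη]; ring_nf

/-! ### The upper bound -/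

/-- The natural cover by intervals of radius `b ^ (-(1 + u) * a n)` around the numerators. -/
lemma dimH_piece_le (b : ℕ) (hb : 2 ≤ b) (a : ℕ → ℕ) (ha : StrictMono a) (w' V τ u K : ℝ)
    (z : ℤ) (N₀ R : ℕ) (D : ℝ≥0) (hD : 0 < D) (hu : 0 < u) (hK0 : 0 ≤ K)
    (hK : ∀ n, ((numer b a w' V z N₀ R n).ncard : ℝ) ≤ K * (b : ℝ) ^ (τ * (a n : ℝ)))
    (hτ : τ < D * (1 + u)) :
    dimH {ξ | ξ ∈ piece b a w' V z N₀ R ∧ ∃ᶠ n in atTop, IsRec b a ξ n ∧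
      dni ((b : ℝ) ^ (a n) * ξ) < (b : ℝ) ^ (-(a n : ℝ) * u)} ≤ D := by
  have hb1 : (1 : ℝ) < b := by exact_mod_cast (by omega : 1 < b)
  have hb0 : (0 : ℝ) < b := by linarith
  have hD' : (0 : ℝ) < D := by exact_mod_cast hD
  apply dimH_le_of_hausdorffMeasure_ne_top
  set P := fun n => numer b a w' V z N₀ R n with hP
  have hfin : ∀ n, (P n).Finite := fun n => numer_finite b hb a w' V z N₀ R n
  set r : ℕ → ℝ := fun n => (b : ℝ) ^ (-(a n : ℝ) * (1 + u)) with hr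
  have hr0 : ∀ n, 0 < r n := fun n => by positivity
  set q : ℝ := (b : ℝ) ^ (τ - D * (1 + u)) with hq
  have hq1 : q < 1 := Real.rpow_lt_one_of_one_lt_of_neg hb1 (by linarith)
  have hq0 : 0 < q := by positivity
  set f : ℕ → ℝ≥0∞ := fun n => ∑' _ : P n, ENNReal.ofReal (2 * r n) ^ (D : ℝ) with hf
  have hfle : ∀ n, f n ≤ ENNReal.ofReal (K * 2 ^ (D : ℝ)) * ENNReal.ofReal q ^ n := by
    intro n
    have := (hfin n).fintype
    simp only [hf]
    rw [tsum_fintype, Finset.sum_const, nsmul_eq_mul, Finset.card_univ, ← Set.toFinset_card,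
      ← Set.ncard_eq_toFinset_card' (P n),
      ENNReal.ofReal_rpow_of_pos (by have := hr0 n; positivity), ← ENNReal.ofReal_natCast,
      ← ENNReal.ofReal_mul (by positivity), ← ENNReal.ofReal_pow hq0.le,
      ← ENNReal.ofReal_mul (by positivity)]
    apply ENNReal.ofReal_le_ofReal
    have h1 : (2 * r n) ^ (D : ℝ) = 2 ^ (D : ℝ) * (b : ℝ) ^ (-(a n : ℝ) * (1 + u) * D) := by
      rw [Real.mul_rpow (by norm_num) (hr0 n).le, hr, ← Real.rpow_mul hb0.le]
    have h2 : (b : ℝ) ^ (τ * (a n : ℝ)) * (b : ℝ) ^ (-(a n : ℝ) * (1 + u) * D) = q ^ (a n) := by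
      rw [hq, ← Real.rpow_add hb0, ← Real.rpow_natCast, ← Real.rpow_mul hb0.le]
      ring_nf
    have h3 : q ^ (a n) ≤ q ^ n := pow_le_pow_of_le_one hq0.le hq1.le ha.le_apply
    calc _ ≤ (K * (b : ℝ) ^ (τ * (a n : ℝ))) *
          (2 ^ (D : ℝ) * (b : ℝ) ^ (-(a n : ℝ) * (1 + u) * D)) := by
          rw [h1]
          gcongr
          exact hK n
      _ = K * 2 ^ (D : ℝ) * q ^ (a n) := by rw [← h2]; ring
      _ ≤ _ := by gcongr
  have hsum : ∑' n, f n ≠ ∞ := by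
    refine ne_top_of_le_ne_top ?_ (ENNReal.tsum_le_tsum hfle)
    rw [ENNReal.tsum_mul_left, ENNReal.tsum_geometric]
    apply ENNReal.mul_ne_top ENNReal.ofReal_ne_top
    rw [ENNReal.inv_ne_top, ne_eq, tsub_eq_zero_iff_le, not_le]
    rw [← ENNReal.ofReal_one]
    exact (ENNReal.ofReal_lt_ofReal_iff one_pos).2 hq1
  have htail := ENNReal.tendsto_sum_nat_add f hsum
  have hcount : ∀ M : ℕ, Countable (Σ n : ℕ, P (n + M)) := fun M => by
    infer_instance
  have hmeas := Measure.hausdorffMeasure_le_liminf_tsum (X := ℝ)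
    (ι := fun M : ℕ => Σ n : ℕ, P (n + M)) (D : ℝ)
    {ξ | ξ ∈ piece b a w' V z N₀ R ∧ ∃ᶠ n in atTop, IsRec b a ξ n ∧
      dni ((b : ℝ) ^ (a n) * ξ) < (b : ℝ) ^ (-(a n : ℝ) * u)} (l := atTop)
    (fun M => ENNReal.ofReal (2 * (b : ℝ) ^ (-(M : ℝ)))) ?_
    (fun M i => Icc ((i.2 : ℤ) / (b : ℝ) ^ (a (i.1 + M)) - r (i.1 + M))
      ((i.2 : ℤ) / (b : ℝ) ^ (a (i.1 + M)) + r (i.1 + M))) ?_ ?_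
  · have heq : (fun M : ℕ => ∑' i : (Σ n : ℕ, P (n + M)),
        Metric.ediam (Icc (((i.2 : ℤ) : ℝ) / (b : ℝ) ^ (a (i.1 + M)) - r (i.1 + M))
        (((i.2 : ℤ) : ℝ) / (b : ℝ) ^ (a (i.1 + M)) + r (i.1 + M))) ^ (D : ℝ)) =
        fun M => ∑' k, f (k + M) := by
      funext M
      refine Eq.trans (tsum_congr fun i => ?_)
        (ENNReal.tsum_sigma fun (n : ℕ) (_ : P (n + M)) =>
          ENNReal.ofReal (2 * r (n + M)) ^ (D : ℝ))
      rw [Real.ediam_Icc]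
      ring_nf
    rw [heq, htail.liminf_eq] at hmeas
    exact ne_top_of_le_ne_top ENNReal.zero_ne_top hmeas
  · rw [← ENNReal.ofReal_zero]
    apply ENNReal.tendsto_ofReal
    have h1 : Tendsto (fun M : ℕ => (b : ℝ)⁻¹ ^ M) atTop (nhds 0) :=
      tendsto_pow_atTop_nhds_zero_of_lt_one (by positivity) (inv_lt_one_of_one_lt₀ hb1)
    have h2 := h1.const_mul 2
    rw [mul_zero] at h2
    refine h2.congr fun M => ?_
    rw [Real.rpow_neg hb0.le, Real.rpow_natCast, inv_pow]
  · refine Eventually.of_forall fun M i => ?_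
    rw [Real.ediam_Icc]
    apply ENNReal.ofReal_le_ofReal
    have : r (i.1 + M) ≤ (b : ℝ) ^ (-(M : ℝ)) := by
      apply Real.rpow_le_rpow_of_exponent_le hb1.le
      have h1 : M ≤ a (i.1 + M) := le_trans (by omega) (ha.le_apply)
      have h2 : (M : ℝ) ≤ a (i.1 + M) := by exact_mod_cast h1
      have h3 : (0 : ℝ) ≤ M := by positivity
      nlinarith
    linarith
  · refine Eventually.of_forall fun M => ?_
    rintro ξ ⟨hξ, hfr⟩
    obtain ⟨n, hnM, hrec, hlt⟩ := frequently_atTop.1 hfr M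
    obtain ⟨k, rfl⟩ : ∃ k, n = k + M := ⟨n - M, by omega⟩
    rw [mem_iUnion]
    refine ⟨⟨k, round ((b : ℝ) ^ (a (k + M)) * ξ), ξ, hξ, hrec, rfl⟩, ?_⟩
    have hB : (0 : ℝ) < (b : ℝ) ^ (a (k + M)) := by positivity
    have hclose : |ξ - (round ((b : ℝ) ^ (a (k + M)) * ξ) : ℤ) / (b : ℝ) ^ (a (k + M))| ≤
        r (k + M) := by
      have h1 : ξ - (round ((b : ℝ) ^ (a (k + M)) * ξ) : ℤ) / (b : ℝ) ^ (a (k + M)) =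
          ((b : ℝ) ^ (a (k + M)) * ξ - (round ((b : ℝ) ^ (a (k + M)) * ξ) : ℤ)) /
          (b : ℝ) ^ (a (k + M)) := by
        field_simp
      rw [h1, abs_div, abs_of_pos hB, div_le_iff₀ hB]
      refine hlt.le.trans (le_of_eq ?_)
      simp only [hr]
      rw [← Real.rpow_natCast, ← Real.rpow_add hb0]
      ring_nf
    rw [abs_le] at hclose
    simp only [mem_Icc]
    constructor <;> linarith [hclose.1, hclose.2]

lemma exists_lt_of_lt_sSup {S : Set ℝ} {x : ℝ}
    (h : (x : EReal) < sSup ((fun v : ℝ => (v : EReal)) '' S)) : ∃ v ∈ S, x < v := by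
  obtain ⟨_, ⟨v, hv, rfl⟩, hlt⟩ := lt_sSup_iff.1 h
  exact ⟨v, hv, EReal.coe_lt_coe_iff.1 hlt⟩

lemma notMem_of_sSup_lt {S : Set ℝ} {x : ℝ}
    (h : sSup ((fun v : ℝ => (v : EReal)) '' S) < (x : EReal)) : x ∉ S := fun hx =>
  absurd (le_sSup (mem_image_of_mem (fun v : ℝ => (v : EReal)) hx)) (not_le.2 h)

/-- Every point with the prescribed exponents lies in one of countably many pieces, and has
infinitely many good records. -/
lemma subset_iUnion_piece (b : ℕ) (hb : 2 ≤ b) (a : ℕ → ℕ) (ha : StrictMono a)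
    (w vv w' V u : ℝ) (hw' : w' < w) (hV : vv < V) (hV0 : 0 ≤ V) (hu0 : 0 < u) (hu : u < vv) :
    {ξ : ℝ | vhatbA b a ξ = (w : EReal) ∧ vbA b a ξ = (vv : EReal)} ⊆
    ⋃ i : ℤ × ℕ × ℕ, {ξ | ξ ∈ piece b a w' V i.1 i.2.1 i.2.2 ∧ ∃ᶠ n in atTop, IsRec b a ξ n ∧
      dni ((b : ℝ) ^ (a n) * ξ) < (b : ℝ) ^ (-(a n : ℝ) * u)} := by
  classical
  have hb1 : (1 : ℝ) < b := by exact_mod_cast (by omega : 1 < b)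
  have hb0 : (0 : ℝ) < b := by linarith
  have haT : Tendsto (fun n => (a n : ℝ)) atTop atTop :=
    tendsto_natCast_atTop_atTop.comp ha.tendsto_atTop
  have htend : ∀ c : ℝ, 0 < c → Tendsto (fun x : ℝ => (b : ℝ) ^ (-x * c)) atTop (nhds 0) := by
    intro c hc
    have h1 := tendsto_rpow_atBot_of_base_gt_one (b : ℝ) hb1
    exact h1.comp ((tendsto_neg_atTop_atBot.atBot_mul_const hc))
  rintro ξ ⟨h1, h2⟩
  obtain ⟨v1, ⟨hv10, hv1⟩, hlt1⟩ := exists_lt_of_lt_sSup (x := w') (by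
    change _ < vhatbA b a ξ; rw [h1]; exact_mod_cast hw')
  obtain ⟨v2, ⟨hv20, hv2⟩, hlt2⟩ := exists_lt_of_lt_sSup (x := u) (by
    change _ < vbA b a ξ; rw [h2]; exact_mod_cast hu)
  have hnot := notMem_of_sSup_lt (x := V) (by
    change vbA b a ξ < _; rw [h2]; exact_mod_cast hV)
  simp only [mem_ofPred_eq, not_and, hV0, true_implies, not_frequently, not_lt] at hnot
  have hU : ∀ᶠ N in atTop, ∃ n, 1 ≤ n ∧ n ≤ N ∧
      dni ((b : ℝ) ^ (a n) * ξ) < (b : ℝ) ^ (-(a N : ℝ) * w') := by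
    filter_upwards [hv1] with N ⟨n, hn1, hnN, hn⟩
    refine ⟨n, hn1, hnN, hn.trans_le (Real.rpow_le_rpow_of_exponent_le hb1.le ?_)⟩
    have : (0 : ℝ) ≤ a N := by positivity
    nlinarith
  have hA : ∀ᶠ n in atTop, (b : ℝ) ^ (-(a n : ℝ) * V) ≤ dni ((b : ℝ) ^ (a n) * ξ) := by
    filter_upwards [hnot, eventually_ge_atTop 1] with n hn h1 using hn h1
  -- an exact hit would persist and make the asymptotic exponent infinite
  have hpos : ∀ n, 0 < dni ((b : ℝ) ^ (a n) * ξ) := by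
    intro n
    by_contra! hle
    have hz : dni ((b : ℝ) ^ (a n) * ξ) = 0 := le_antisymm hle (dni_nonneg _)
    obtain ⟨m, hm, hmn⟩ := (hA.and (eventually_ge_atTop n)).exists
    have hpow : (b : ℝ) ^ (a m) = ((b ^ (a m - a n) : ℕ) : ℝ) * (b : ℝ) ^ (a n) := by
      push_cast
      rw [← pow_add, Nat.sub_add_cancel (ha.monotone hmn)]
    have := dni_mul_le ((b : ℝ) ^ (a n) * ξ) (b ^ (a m - a n))
    rw [← mul_assoc, ← hpow, hz, mul_zero] at this
    have h3 : 0 < (b : ℝ) ^ (-(a m : ℝ) * V) := by positivity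
    linarith
  obtain ⟨N₀, hN₀⟩ := eventually_atTop.1 (hU.and hA)
  have hR : ∀ᶠ R : ℕ in atTop, ∀ n ∈ Finset.range N₀,
      (b : ℝ) ^ (-(R : ℝ)) ≤ dni ((b : ℝ) ^ (a n) * ξ) := by
    rw [Filter.eventually_all_finset]
    intro n _
    have := ((htend 1 one_pos).comp tendsto_natCast_atTop_atTop).eventually
      (gt_mem_nhds (hpos n))
    filter_upwards [this] with R hR
    simpa using hR.le
  obtain ⟨R, hR⟩ := hR.exists
  rw [mem_iUnion]
  refine ⟨(⌊ξ⌋, N₀, R), ⟨⟨Int.floor_le ξ, Int.lt_floor_add_one ξ⟩, fun N hN => (hN₀ N hN).1,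
    fun n hn => (hN₀ n hn).2, fun n _ hn => hR n (Finset.mem_range.2 hn)⟩, ?_⟩
  rw [frequently_atTop]
  intro M
  have hsmall : ∀ᶠ n in atTop, ∀ m ∈ Finset.range M,
      (b : ℝ) ^ (-(a n : ℝ) * u) ≤ dni ((b : ℝ) ^ (a m) * ξ) := by
    rw [Filter.eventually_all_finset]
    intro m _
    filter_upwards [((htend u hu0).comp haT).eventually (gt_mem_nhds (hpos m))] with n hn
      using le_of_lt hn
  obtain ⟨n, ⟨hn1, hn⟩, hnM⟩ := (hv2.and_eventually hsmall).exists
  have hnu : dni ((b : ℝ) ^ (a n) * ξ) < (b : ℝ) ^ (-(a n : ℝ) * u) := by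
    refine hn.trans_le (Real.rpow_le_rpow_of_exponent_le hb1.le ?_)
    have : (0 : ℝ) ≤ a n := by positivity
    nlinarith
  -- the first index doing at least as well as `n` is a record
  have hex : ∃ m, 1 ≤ m ∧ dni ((b : ℝ) ^ (a m) * ξ) ≤ dni ((b : ℝ) ^ (a n) * ξ) :=
    ⟨n, hn1, le_rfl⟩
  obtain ⟨hm1, hm⟩ := Nat.find_spec hex
  have hmin : ∀ j, j < Nat.find hex → _ := fun j hj => Nat.find_min hex hj
  have hmn : Nat.find hex ≤ n := Nat.find_min' hex ⟨hn1, le_rfl⟩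
  set m := Nat.find hex
  refine ⟨m, ?_, ⟨hm1, fun j hj1 hjm => ?_⟩, ?_⟩
  · by_contra! hlt
    have := hnM m (Finset.mem_range.2 hlt)
    linarith
  · have := hmin j hjm
    simp only [not_and, not_le] at this
    exact hm.trans_lt (this hj1)
  · refine (hm.trans_lt hnu).trans_le (Real.rpow_le_rpow_of_exponent_le hb1.le ?_)
    have : (a m : ℝ) ≤ a n := by exact_mod_cast ha.monotone hmn
    nlinarith

lemma dimH_upper (b : ℕ) (hb : 2 ≤ b) (a : ℕ → ℕ) (ha : StrictMono a) (hpos : ∀ n, 1 ≤ a n)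
    (hη : Tendsto (fun n => (a (n + 1) : ℝ) / (a n : ℝ)) atTop (nhds 1))
    (w : ℝ) (hw : w ∈ Set.Ioo (0 : ℝ) 1) (θ : ℝ) (hθ : 1 / (1 - w) ≤ θ) :
    dimH {ξ : ℝ | vhatbA b a ξ = (w : EReal) ∧ vbA b a ξ = ((θ * w : ℝ) : EReal)} ≤
      ENNReal.ofReal ((θ - 1 - θ * w) / ((θ - 1) * (1 + θ * w))) := by
  obtain ⟨hw0, hw1⟩ := hw
  have hθ1 : 1 < θ := lt_of_lt_of_le (by rw [lt_div_iff₀ (by linarith)]; linarith) hθ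
  have hθw : θ * w ≤ θ - 1 := by
    rw [div_le_iff₀ (by linarith)] at hθ; nlinarith
  have hθw0 : 0 < θ * w := by positivity
  set T := (θ - 1 - θ * w) / ((θ - 1) * (1 + θ * w)) with hT
  have hT0 : 0 ≤ T := div_nonneg (by linarith) (mul_nonneg (by linarith) (by linarith))
  apply le_of_forall_gt_imp_ge_of_dense
  intro D' hD'
  obtain ⟨D, hD1, hD2⟩ := ENNReal.lt_iff_exists_nnreal_btwn.1 hD'
  refine le_trans ?_ hD2.le
  have hTD : T < D := by
    rw [← ENNReal.ofReal_coe_nnreal] at hD1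
    exact (ENNReal.ofReal_lt_ofReal_iff_of_nonneg hT0).1 hD1
  set σ := (θ - 1 - θ * w) / (θ - 1) with hσ
  have hσT : σ = T * (1 + θ * w) := by
    have : 1 + θ * w ≠ 0 := by positivity
    have : θ - 1 ≠ 0 := by linarith
    rw [hσ, hT]; field_simp
  have hσ1 : σ < 1 := by
    rw [hσ, div_lt_one (by linarith)]; linarith
  obtain ⟨τ, hστ, hτ⟩ := exists_between
    (lt_min hσ1 (by rw [hσT]; nlinarith : σ < D * (1 + θ * w)))
  obtain ⟨hτ1, hτD⟩ := lt_min_iff.1 hτ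
  -- all remaining parameters are small perturbations of the critical ones
  have hc1 : ∀ᶠ ε in nhds (0 : ℝ), τ < D * (1 + (θ * w - ε)) := by
    apply ContinuousAt.eventually_lt (by fun_prop) (by fun_prop)
    simpa using hτD
  have hc2 : ∀ᶠ ε in nhds (0 : ℝ),
      1 - (1 - ε) * ((w - ε) * (1 + (1 - τ) / (θ * w + ε))) < τ := by
    apply ContinuousAt.eventually_lt
    · have : θ * w + 0 ≠ 0 := by positivity
      fun_prop (disch := assumption)
    · fun_prop
    · have h1 : (θ - 1 - θ * w) < τ * (θ - 1) := by
        rwa [hσ, div_lt_iff₀ (by linarith)] at hστ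
      have h2 : 1 - w * (1 + (1 - τ) / (θ * w)) = 1 - w - (1 - τ) / θ := by
        field_simp
        ring
      simp only [sub_zero, add_zero, one_mul]
      rw [h2, sub_lt_iff_lt_add, ← sub_lt_iff_lt_add', lt_div_iff₀ (by linarith)]
      nlinarith
  have hc3 : ∀ᶠ ε in nhds (0 : ℝ), ε < w := eventually_lt_nhds hw0
  have hc4 : ∀ᶠ ε in nhds (0 : ℝ), ε < θ * w := eventually_lt_nhds hθw0
  have hc5 : ∀ᶠ ε in nhds (0 : ℝ), ε < 1 := eventually_lt_nhds one_pos
  obtain ⟨ε, ⟨e1, e2, e3, e4, e5⟩, hε⟩ := (((hc1.and (hc2.and (hc3.and (hc4.and hc5)))).filter_mono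
    nhdsWithin_le_nhds).and (self_mem_nhdsWithin : Ioi (0 : ℝ) ∈ nhdsWithin 0 (Ioi 0))).exists
  have hε0 : 0 < ε := hε
  have hρ : ∀ᶠ n in atTop, (1 - ε) * (a (n + 1) : ℝ) ≤ a n := by
    have h1 : (1 : ℝ) < 1 / (1 - ε) := by rw [lt_div_iff₀ (by linarith)]; linarith
    filter_upwards [hη.eventually (gt_mem_nhds h1)] with n hn
    have hn0 : (0 : ℝ) < a n := by exact_mod_cast hpos n
    rw [div_lt_div_iff₀ hn0 (by linarith)] at hn
    linarith
  have hD0 : 0 < D := by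
    have : (0 : ℝ) < D := lt_of_le_of_lt hT0 hTD
    exact_mod_cast this
  refine (dimH_mono (subset_iUnion_piece b hb a ha w (θ * w) (w - ε) (θ * w + ε) (θ * w - ε)
    (by linarith) (by linarith) (by linarith) (by linarith) (by linarith))).trans ?_
  rw [dimH_iUnion]
  refine iSup_le fun i => ?_
  obtain ⟨K, hK0, hK⟩ := numer_card b hb a ha (w - ε) (θ * w + ε) τ (1 - ε) (by linarith)
    (by linarith) hτ1 hρ e2 i.1 i.2.1 i.2.2
  exact dimH_piece_le b hb a ha _ _ τ _ K _ _ _ D hD0 (by linarith) hK0 hK e1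

/-! ### Expansions with prescribed blocks of zeros -/

/-- A map of `[0, 1)` whose inverse is Hölder with exponent `s` has an image of dimension at
least `s`. -/
lemma le_dimH_image (F : ℝ → ℝ) (s C : ℝ) (hs : 0 < s) (hC : 0 ≤ C)
    (h : ∀ t ∈ Ico (0 : ℝ) 1, ∀ t' ∈ Ico (0 : ℝ) 1, |t - t'| ≤ C * |F t - F t'| ^ s) :
    ENNReal.ofReal s ≤ dimH (F '' Ico (0 : ℝ) 1) := by
  have hinj : InjOn F (Ico (0 : ℝ) 1) := by
    intro t ht t' ht' heq
    have := h t ht t' ht'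
    rw [heq, sub_self, abs_zero, Real.zero_rpow hs.ne', mul_zero] at this
    exact sub_eq_zero.1 (abs_eq_zero.1 (le_antisymm this (abs_nonneg _)))
  set g := Function.invFunOn F (Ico (0 : ℝ) 1)
  have hg : ∀ t ∈ Ico (0 : ℝ) 1, g (F t) = t := fun t ht => hinj.leftInvOn_invFunOn ht
  lift C to ℝ≥0 using hC
  lift s to ℝ≥0 using hs.le
  have hs' : 0 < s := by exact_mod_cast hs
  have hhol : HolderOnWith C s g (F '' Ico (0 : ℝ) 1) := by
    rintro _ ⟨t, ht, rfl⟩ _ ⟨t', ht', rfl⟩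
    rw [hg t ht, hg t' ht', edist_dist, edist_dist, Real.dist_eq, Real.dist_eq,
      ENNReal.ofReal_rpow_of_nonneg (abs_nonneg _) hs.le, ← ENNReal.ofReal_coe_nnreal,
      ← ENNReal.ofReal_mul (NNReal.coe_nonneg C)]
    exact ENNReal.ofReal_le_ofReal (h t ht t' ht')
  have himg : g '' (F '' Ico (0 : ℝ) 1) = Ico 0 1 := by
    rw [image_image]
    exact (image_congr hg).trans (image_id' _)
  have h1 := hhol.dimH_image_le hs'
  have h2 : dimH (Ico (0 : ℝ) 1) = 1 := by
    rw [Real.dimH_of_nonempty_interior (by simp)]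
    simp
  rw [himg, h2] at h1
  rw [ENNReal.ofReal_coe_nnreal]
  have hs0 : (s : ℝ≥0∞) ≠ 0 := by exact_mod_cast hs'.ne'
  rwa [ENNReal.le_div_iff_mul_le (Or.inl hs0) (Or.inl ENNReal.coe_ne_top), one_mul] at h1

/-- The place `j` lies in one of the prescribed blocks of zeros `[x k, y k)`. -/
def InRun (x y : ℕ → ℕ) (j : ℕ) : Prop := ∃ k, x k ≤ j ∧ j < y k

/-- The places whose digits are not prescribed: those outside all blocks of zeros that are not
multiples of `M`. -/
def Free (x y : ℕ → ℕ) (M j : ℕ) : Prop := ¬ InRun x y j ∧ ¬ M ∣ j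

open Classical in
/-- The digit sequence with zeros on the blocks, alternating `0` and `1` at the multiples of `M`
outside the blocks, and the digits `u 0, u 1, …` written one after the other on the free places. -/
noncomputable def fill {b : ℕ} (hb : 2 ≤ b) (x y : ℕ → ℕ) (M : ℕ) (u : ℕ → Fin b) (j : ℕ) :
    Fin b :=
  if InRun x y j then ⟨0, by omega⟩
  else if M ∣ j then (if Even (j / M) then ⟨0, by omega⟩ else ⟨1, by omega⟩)
  else u (Nat.count (Free x y M) j)

lemma fill_run {b : ℕ} (hb : 2 ≤ b) {x y : ℕ → ℕ} {M : ℕ} (u : ℕ → Fin b) {j : ℕ}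
    (h : InRun x y j) : (fill hb x y M u j : ℕ) = 0 := by
  simp [fill, h]

lemma fill_not_free {b : ℕ} (hb : 2 ≤ b) {x y : ℕ → ℕ} {M : ℕ} (u u' : ℕ → Fin b) {j : ℕ}
    (h : ¬ Free x y M j) :
    fill hb x y M u j = fill hb x y M u' j := by
  unfold Free at h
  unfold fill
  split_ifs <;> tauto

open Classical in
lemma fill_free {b : ℕ} (hb : 2 ≤ b) {x y : ℕ → ℕ} {M : ℕ} (u : ℕ → Fin b) {j : ℕ}
    (h : Free x y M j) :
    fill hb x y M u j = u (Nat.count (Free x y M) j) := by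
  simp [fill, h.1, h.2]

/-- `2 * M` consecutive places outside the blocks contain both digits `0` and `1`. -/
lemma fill_window {b : ℕ} (hb : 2 ≤ b) {x y : ℕ → ℕ} {M : ℕ} (hM : 0 < M) (u : ℕ → Fin b) (p : ℕ)
    (hp : ∀ j, p ≤ j → j < p + 2 * M → ¬ InRun x y j) :
    (∃ i, p ≤ i ∧ i < p + 2 * M ∧ (fill hb x y M u i : ℕ) = 0) ∧
    ∃ i, p ≤ i ∧ i < p + 2 * M ∧ (fill hb x y M u i : ℕ) = 1 := by
  obtain ⟨q, hq1, hq2⟩ : ∃ q, p ≤ M * q ∧ M * q < p + M := by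
    refine ⟨(p + M - 1) / M, ?_, ?_⟩
    · have := Nat.lt_mul_div_succ (p + M - 1) hM
      rw [mul_add] at this
      omega
    · have := Nat.mul_div_le (p + M - 1) M
      omega
  have hval : ∀ r, p ≤ M * r → M * r < p + 2 * M →
      (fill hb x y M u (M * r) : ℕ) = if Even r then 0 else 1 := by
    intro r h1 h2
    simp only [fill, hp _ h1 h2, if_false, dvd_mul_right, if_true, Nat.mul_div_cancel_left _ hM]
    split_ifs <;> rfl
  have e1 := hval q hq1 (by omega)
  have e2 := hval (q + 1) (by rw [mul_add]; omega) (by rw [mul_add]; omega)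
  simp only [Nat.even_add_one] at e2
  have b2 : p ≤ M * (q + 1) ∧ M * (q + 1) < p + 2 * M := by rw [mul_add]; omega
  by_cases hE : Even q
  · simp only [hE, not_true, if_true, if_false] at e1 e2
    exact ⟨⟨_, hq1, by omega, e1⟩, ⟨_, b2.1, b2.2, e2⟩⟩
  · simp only [hE, not_false_iff, if_true, if_false] at e1 e2
    exact ⟨⟨_, b2.1, b2.2, e2⟩, ⟨_, hq1, by omega, e1⟩⟩

lemma run_mono {x y : ℕ → ℕ} {M : ℕ} (hxy : ∀ k, x k ≤ y k)
    (hyx : ∀ k, y k + 2 * M ≤ x (k + 1)) : Monotone x ∧ Monotone y := by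
  constructor <;> refine monotone_nat_of_le_succ fun k => ?_ <;>
    have := hxy k <;> have := hyx k <;> have := hxy (k + 1) <;> omega

lemma not_inRun {x y : ℕ → ℕ} {M : ℕ} (hxy : ∀ k, x k ≤ y k) (hyx : ∀ k, y k + 2 * M ≤ x (k + 1))
    {k j : ℕ} (h1 : y k ≤ j) (h2 : j < x (k + 1)) : ¬ InRun x y j := by
  obtain ⟨mx, my⟩ := run_mono hxy hyx
  rintro ⟨i, hi1, hi2⟩
  rcases Nat.lt_or_ge k i with h | h
  · have := mx (show k + 1 ≤ i from h); omega
  · have := my h; omega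

/-- A window of `2 * M` digits right after the block `k`, seen from a place before its end. -/
lemma le_dni_fill {b : ℕ} (hb : 2 ≤ b) {x y : ℕ → ℕ} {M : ℕ} (hxy : ∀ k, x k ≤ y k)
    (hyx : ∀ k, y k + 2 * M ≤ x (k + 1)) (hM : 0 < M) (u : ℕ → Fin b) {k n : ℕ} (hn : n ≤ y k) :
    ((b : ℝ) ^ (y k + 2 * M - n))⁻¹ ≤
      dni ((b : ℝ) ^ n * Real.ofDigits (fill hb x y M u)) := by
  obtain ⟨⟨i, h1, h2, h3⟩, ⟨j, h4, h5, h6⟩⟩ := fill_window hb hM u (y k) (x := x) (y := y)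
    fun j h1 h2 => not_inRun hxy hyx h1 (by have := hyx k; omega)
  exact le_dni_ofDigits _ (i := j) (j := i) (by omega) (by omega) (by omega) (by omega)
    (by omega) (by omega)

lemma le_dni_fill' {b : ℕ} (hb : 2 ≤ b) {x y : ℕ → ℕ} {M : ℕ} (hxy : ∀ k, x k ≤ y k)
    (hyx : ∀ k, y k + 2 * M ≤ x (k + 1)) (hM : 0 < M) (u : ℕ → Fin b) {k n : ℕ} (hn : y k ≤ n)
    (hn' : n + 2 * M ≤ x (k + 1)) :
    ((b : ℝ) ^ (2 * M))⁻¹ ≤ dni ((b : ℝ) ^ n * Real.ofDigits (fill hb x y M u)) := by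
  obtain ⟨⟨i, h1, h2, h3⟩, ⟨j, h4, h5, h6⟩⟩ := fill_window hb hM u n (x := x) (y := y)
    fun j h1 h2 => not_inRun hxy hyx (hn.trans h1) (by omega)
  exact le_dni_ofDigits _ (i := j) (j := i) (by omega) (by omega) (by omega) (by omega)
    (by omega) (by omega)

/-- Before the block `k + 1`, nothing beats the block `k` by more than a constant factor. -/
lemma le_dni_fill_of_le {b : ℕ} (hb : 2 ≤ b) {x y : ℕ → ℕ} {M : ℕ} (hxy : ∀ k, x k ≤ y k)
    (hyx : ∀ k, y k + 2 * M ≤ x (k + 1)) (hM : 0 < M) (hL : Monotone fun k => y k - x k)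
    (u : ℕ → Fin b) (k : ℕ) :
    ∀ n, n + 2 * M ≤ x (k + 1) → ((b : ℝ) ^ (y 0 + 4 * M + (y k - x k)))⁻¹ ≤
      dni ((b : ℝ) ^ n * Real.ofDigits (fill hb x y M u)) := by
  have hb1 : (1 : ℝ) ≤ b := by exact_mod_cast (by omega : 1 ≤ b)
  have hmono : ∀ {i j : ℕ}, i ≤ j → ((b : ℝ) ^ j)⁻¹ ≤ ((b : ℝ) ^ i)⁻¹ := fun h => by gcongr
  induction k with
  | zero =>
    intro n hn
    rcases le_total (y 0) n with h | h
    · exact (hmono (by omega)).trans (le_dni_fill' hb hxy hyx hM u h hn)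
    · exact (hmono (by omega)).trans (le_dni_fill hb hxy hyx hM u h)
  | succ k ih =>
    intro n hn
    rcases le_total (y (k + 1)) n with h | h
    · exact (hmono (by omega)).trans (le_dni_fill' hb hxy hyx hM u h hn)
    · rcases le_or_gt (n + 2 * M) (x (k + 1)) with h2 | h2
      · have : y k - x k ≤ y (k + 1) - x (k + 1) := hL (Nat.le_succ k)
        exact (hmono (by omega)).trans (ih n h2)
      · have := hxy (k + 1)
        exact (hmono (by omega)).trans (le_dni_fill hb hxy hyx hM u h)

lemma dni_fill_le {b : ℕ} (hb : 2 ≤ b) {x y : ℕ → ℕ} {M : ℕ} (u : ℕ → Fin b) (k : ℕ) :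
    dni ((b : ℝ) ^ (x k) * Real.ofDigits (fill hb x y M u)) ≤ ((b : ℝ) ^ (y k - x k))⁻¹ :=
  dni_ofDigits_le _ fun i h1 h2 => fill_run hb u ⟨k, h1, by omega⟩

lemma count_dvd_bounds {M : ℕ} (hM : 0 < M) (n : ℕ) :
    n ≤ M * Nat.count (M ∣ ·) n ∧ M * Nat.count (M ∣ ·) n < n + M := by
  induction n with
  | zero => simpa using hM
  | succ n ih =>
    rw [Nat.count_succ]
    split_ifs with h
    · obtain ⟨q, rfl⟩ := h
      obtain ⟨h1, h2⟩ := ih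
      have h3 : q ≤ Nat.count (M ∣ ·) (M * q) := Nat.le_of_mul_le_mul_left h1 hM
      have h4 : Nat.count (M ∣ ·) (M * q) < q + 1 := by
        rw [← Nat.mul_add_one] at h2
        exact Nat.lt_of_mul_lt_mul_left h2
      have h5 : Nat.count (M ∣ ·) (M * q) = q := by omega
      rw [h5, Nat.mul_add_one]
      omega
    · have : n ≠ M * Nat.count (M ∣ ·) n := fun he => h ⟨_, he⟩
      rw [add_zero]
      omega

open Classical in
/-- Between two blocks the free places have density `1 - 1 / M`. -/
lemma count_free_ge {x y : ℕ → ℕ} {M : ℕ} (hM : 0 < M) {p n : ℕ} (hpn : p ≤ n)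
    (h : ∀ j, p ≤ j → j < n → ¬ InRun x y j) :
    (Nat.count (Free x y M) p : ℝ) + (1 - 1 / M) * (n - p) - 1 ≤ Nat.count (Free x y M) n := by
  have key : Nat.count (Free x y M) n + Nat.count (M ∣ ·) n + p =
      Nat.count (Free x y M) p + Nat.count (M ∣ ·) p + n := by
    induction n, hpn using Nat.le_induction with
    | base => rfl
    | succ n hpn ih =>
      have := ih fun j h1 h2 => h j h1 (by omega)
      have hn := h n hpn (by omega)
      rw [Nat.count_succ, Nat.count_succ]
      have hfree : Free x y M n ↔ ¬ M ∣ n := ⟨And.right, fun h => ⟨hn, h⟩⟩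
      by_cases hd : M ∣ n <;>
        simp only [hfree, hd, not_true, not_false_iff, if_true, if_false] <;> omega
  have h1 := (count_dvd_bounds hM p).1
  have h2 := (count_dvd_bounds hM n).2
  have hM' : (0 : ℝ) < M := by exact_mod_cast hM
  have key' : (Nat.count (Free x y M) n : ℝ) + Nat.count (M ∣ ·) n + p =
      Nat.count (Free x y M) p + Nat.count (M ∣ ·) p + n := by exact_mod_cast key
  have h1' : (p : ℝ) / M ≤ Nat.count (M ∣ ·) p := by
    rw [div_le_iff₀' hM']; exact_mod_cast h1
  have h2' : (Nat.count (M ∣ ·) n : ℝ) ≤ n / M + 1 := by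
    rw [← sub_le_iff_le_add, le_div_iff₀' hM', mul_sub]
    have : (M : ℝ) * Nat.count (M ∣ ·) n < n + M := by exact_mod_cast h2
    linarith
  have : (1 - 1 / (M : ℝ)) * (n - p) = n - p - (n / M - p / M) := by ring
  linarith

open Classical in
/-- A linear lower bound for the number of free places; `σ` is the density at the places `x k`,
where a block begins, and `s` the density at the places `y k`, where it ends. -/
lemma count_free_linear {x y : ℕ → ℕ} {M : ℕ} (hxy : ∀ k, x k ≤ y k)
    (hyx : ∀ k, y k + 2 * M ≤ x (k + 1)) (hM : 0 < M) (s σ : ℝ) (hs : 0 ≤ s) (hsM : s ≤ 1 - 1 / M)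
    (h1 : ∀ k, σ * (x (k + 1) - x k) + 1 ≤ (1 - 1 / M) * (x (k + 1) - y k))
    (h2 : ∀ k, s * y k ≤ σ * x k) (n : ℕ) :
    s * n - (σ * x 0 + 1) ≤ Nat.count (Free x y M) n := by
  obtain ⟨mx, my⟩ := run_mono hxy hyx
  have hx : ∀ k, σ * x k - σ * x 0 ≤ Nat.count (Free x y M) (x k) := by
    intro k
    induction k with
    | zero => simp
    | succ k ih =>
      have hle : y k ≤ x (k + 1) := by have := hyx k; omega
      have e1 := count_free_ge (x := x) (y := y) hM hle fun j a1 a2 => not_inRun hxy hyx a1 a2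
      have e2 : (Nat.count (Free x y M) (x k) : ℝ) ≤ Nat.count (Free x y M) (y k) := by
        exact_mod_cast Nat.count_monotone _ (hxy k)
      have := h1 k
      linarith
  rcases lt_or_ge n (x 0) with hn | hn
  · have e1 : (n : ℝ) ≤ y 0 := by exact_mod_cast hn.le.trans (hxy 0)
    have e2 := h2 0
    have : (0 : ℝ) ≤ Nat.count (Free x y M) n := by positivity
    nlinarith
  have hsm : StrictMono x := strictMono_nat_of_lt_succ fun k => by
    have := hxy k; have := hyx k; omega
  obtain ⟨k, hk1, hk2⟩ : ∃ k, x k ≤ n ∧ n < x (k + 1) := by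
    have hex : ∃ k, n < x (k + 1) := ⟨n, hsm.le_apply⟩
    have hs := Nat.find_spec hex
    have hm : ∀ j, j < Nat.find hex → _ := fun j hj => Nat.find_min hex hj
    set k := Nat.find hex
    refine ⟨k, ?_, hs⟩
    rcases Nat.eq_zero_or_pos k with h0 | h0
    · rwa [h0]
    · have := hm (k - 1) (by omega)
      rw [Nat.sub_add_cancel h0] at this
      omega
  have e1 := hx k
  have e2 := h2 k
  rcases le_total n (y k) with hny | hny
  · have e3 : (Nat.count (Free x y M) (x k) : ℝ) ≤ Nat.count (Free x y M) n := by
      exact_mod_cast Nat.count_monotone _ hk1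
    have e4 : (n : ℝ) ≤ y k := by exact_mod_cast hny
    nlinarith
  · have e3 : (Nat.count (Free x y M) (x k) : ℝ) ≤ Nat.count (Free x y M) (y k) := by
      exact_mod_cast Nat.count_monotone _ (hxy k)
    have e4 := count_free_ge (x := x) (y := y) hM hny
      fun j a1 a2 => not_inRun hxy hyx a1 (a2.trans hk2)
    have e5 : (y k : ℝ) ≤ n := by exact_mod_cast hny
    nlinarith

open Classical in
/-- The map from the filled expansion back to `u` is Hölder continuous of exponent `s`: two points
whose first different digit is at `n` share their first `s * n - O(1)` free digits, and agree again
at the next multiple of `M`. -/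
lemma le_dimH_range_fill {b : ℕ} (hb : 2 ≤ b) {x y : ℕ → ℕ} {M : ℕ} (hM : 0 < M) (s C : ℝ)
    (hs : 0 < s)
    (hcount : ∀ n : ℕ, s * n - C ≤ Nat.count (Free x y M) n) :
    ENNReal.ofReal s ≤ dimH (range fun u : ℕ → Fin b => Real.ofDigits (fill hb x y M u)) := by
  have hb1 : (1 : ℝ) < b := by exact_mod_cast (by omega : 1 < b)
  have hb0 : (0 : ℝ) < b := by linarith
  have : NeZero b := ⟨by omega⟩
  have hinf : {j | Free x y M j}.Infinite := by
    intro hfin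
    obtain ⟨n, hn⟩ := exists_nat_gt ((C + hfin.toFinset.card) / s)
    rw [div_lt_iff₀ hs] at hn
    have h1 : Nat.count (Free x y M) n ≤ hfin.toFinset.card := by
      rw [Nat.count_eq_card_filter_range]
      apply Finset.card_le_card
      intro j hj
      exact hfin.mem_toFinset.2 (Finset.mem_filter.1 hj).2
    have h2 : (Nat.count (Free x y M) n : ℝ) ≤ hfin.toFinset.card := by exact_mod_cast h1
    have := hcount n
    linarith
  set C' : ℝ := (b : ℝ) ^ (C + s * (M + 1)) with hC'
  have hkey : ∀ u u' : ℕ → Fin b, |Real.ofDigits u - Real.ofDigits u'| ≤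
      C' * |Real.ofDigits (fill hb x y M u) - Real.ofDigits (fill hb x y M u')| ^ s := by
    intro u u'
    by_cases huu : u = u'
    · subst huu
      simp only [sub_self, abs_zero]
      positivity
    obtain ⟨i, hi⟩ := Function.ne_iff.1 huu
    have hex : ∃ n, fill hb x y M u n ≠ fill hb x y M u' n := by
      refine ⟨Nat.nth (Free x y M) i, ?_⟩
      have hf : Free x y M (Nat.nth (Free x y M) i) := Nat.nth_mem_of_infinite hinf i
      rw [fill_free hb u hf, fill_free hb u' hf, Nat.count_nth_of_infinite hinf]
      exact hi
    have hn := Nat.find_spec hex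
    have hmin : ∀ j, j < Nat.find hex → _ := fun j hj => Nat.find_min hex hj
    set n := Nat.find hex
    have hagree : ∀ i < Nat.count (Free x y M) n, u i = u' i := by
      intro i hi
      have hf : Free x y M (Nat.nth (Free x y M) i) := Nat.nth_mem_of_infinite hinf i
      have := hmin _ (Nat.nth_lt_of_lt_count hi)
      rw [not_not, fill_free hb u hf, fill_free hb u' hf,
        Nat.count_nth_of_infinite hinf] at this
      exact this
    have hup := Real.abs_ofDigits_sub_ofDigits_le hagree
    have hlow := le_abs_ofDigits_sub (fill hb x y M u) (fill hb x y M u')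
      (n := n) (m := M * (n / M + 1)) (Nat.lt_mul_div_succ n hM) hn
      (fill_not_free hb u u' fun h => h.2 (dvd_mul_right _ _))
    have hle : ((b : ℝ) ^ (n + M + 1))⁻¹ ≤ ((b : ℝ) ^ (M * (n / M + 1) + 1))⁻¹ := by
      have := Nat.mul_div_le n M
      gcongr
      · exact hb1.le
      · rw [Nat.mul_add_one]; omega
    calc |Real.ofDigits u - Real.ofDigits u'| ≤ _ := hup
      _ = (b : ℝ) ^ (-(Nat.count (Free x y M) n : ℝ)) := by
          rw [Real.rpow_neg hb0.le, Real.rpow_natCast]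
      _ ≤ (b : ℝ) ^ (C + s * (M + 1) + -((n + M + 1 : ℕ) : ℝ) * s) := by
          apply Real.rpow_le_rpow_of_exponent_le hb1.le
          have := hcount n
          push_cast
          nlinarith
      _ = C' * (((b : ℝ) ^ (n + M + 1))⁻¹) ^ s := by
          rw [Real.rpow_add hb0, Real.rpow_mul hb0.le, Real.rpow_neg hb0.le, Real.rpow_natCast]
      _ ≤ _ := by
          gcongr
          exact hle.trans hlow
  refine (le_dimH_image (fun t => Real.ofDigits (fill hb x y M (Real.digits t b))) s C' hs
    (by positivity) ?_).trans (dimH_mono ?_)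
  · intro t ht t' ht'
    have := hkey (Real.digits t b) (Real.digits t' b)
    rwa [Real.ofDigits_digits (by omega) ht, Real.ofDigits_digits (by omega) ht'] at this
  · rintro _ ⟨t, -, rfl⟩
    exact ⟨_, rfl⟩

/-! ### The exponents of the constructed points -/

lemma sSup_coe_eq {S : Set ℝ} {c : ℝ} (hc : 0 < c) (hle : ∀ v ∈ S, v ≤ c)
    (hlt : ∀ v, 0 ≤ v → v < c → v ∈ S) :
    sSup ((fun v : ℝ => (v : EReal)) '' S) = (c : EReal) := by
  apply le_antisymm
  · apply sSup_le
    rintro _ ⟨v, hv, rfl⟩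
    exact EReal.coe_le_coe_iff.2 (hle v hv)
  · refine le_of_forall_lt fun e he => ?_
    obtain ⟨r, hr1, hr2⟩ := EReal.lt_iff_exists_real_btwn.1 he
    have hrc : r < c := EReal.coe_lt_coe_iff.1 hr2
    have hmem := hlt (max r 0) (le_max_right _ _) (max_lt hrc hc)
    refine lt_of_lt_of_le hr1 (le_trans ?_
      (le_sSup (mem_image_of_mem (fun v : ℝ => (v : EReal)) hmem)))
    exact EReal.coe_le_coe_iff.2 (le_max_left _ _)

/-- The largest term `a (g t)` of the sequence that is at most `t` is asymptotic to `t`. -/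
lemma exists_largest_term (a : ℕ → ℕ) (ha : StrictMono a)
    (hη : Tendsto (fun n => (a (n + 1) : ℝ) / (a n : ℝ)) atTop (nhds 1)) :
    ∃ g : ℝ → ℕ, (∀ t : ℝ, (a 0 : ℝ) ≤ t → (a (g t) : ℝ) ≤ t) ∧ Tendsto g atTop atTop ∧
      Tendsto (fun t => (a (g t) : ℝ) / t) atTop (nhds 1) := by
  classical
  set g : ℝ → ℕ := fun t => Nat.findGreatest (fun n => (a n : ℝ) ≤ t) ⌊t⌋₊ with hg
  have hbound : ∀ {n : ℕ} {t : ℝ}, (a n : ℝ) ≤ t → n ≤ ⌊t⌋₊ := fun {n t} h =>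
    Nat.le_floor (le_trans (by exact_mod_cast ha.le_apply) h)
  have h1 : ∀ t : ℝ, (a 0 : ℝ) ≤ t → (a (g t) : ℝ) ≤ t := fun t ht =>
    Nat.findGreatest_spec (P := fun n => (a n : ℝ) ≤ t) (Nat.zero_le ⌊t⌋₊) ht
  have h2 : ∀ t : ℝ, t < a (g t + 1) := by
    intro t
    by_contra! h
    have := Nat.le_findGreatest (P := fun n => (a n : ℝ) ≤ t) (hbound h) h
    change g t + 1 ≤ g t at this
    omega
  have h3 : Tendsto g atTop atTop := by
    refine tendsto_atTop.2 fun n => ?_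
    filter_upwards [eventually_ge_atTop (a n : ℝ)] with t ht
    exact Nat.le_findGreatest (P := fun n => (a n : ℝ) ≤ t) (hbound ht) ht
  refine ⟨g, h1, h3, ?_⟩
  have hinv : Tendsto (fun t => ((a (g t + 1) : ℝ) / a (g t))⁻¹) atTop (nhds 1) := by
    simpa using (hη.comp h3).inv₀ one_ne_zero
  refine tendsto_of_tendsto_of_tendsto_of_le_of_le' hinv tendsto_const_nhds ?_ ?_
  · filter_upwards [eventually_gt_atTop (0 : ℝ)] with t ht
    rw [inv_div]
    exact div_le_div_of_nonneg_left (by positivity) ht (h2 t).le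
  · filter_upwards [eventually_gt_atTop (0 : ℝ), eventually_ge_atTop (a 0 : ℝ)] with t ht ht0
    exact div_le_one_of_le₀ (h1 t ht0) ht.le

/-- The exponents of every point whose digits are filled in around blocks of zeros that begin at
terms `x k` of the sequence, growing geometrically with ratio `θ`, and have length `θ * w * x k`. -/
lemma exponents_fill {b : ℕ} (hb : 2 ≤ b) (a : ℕ → ℕ) (ha : StrictMono a)
    (hη : Tendsto (fun n => (a (n + 1) : ℝ) / (a n : ℝ)) atTop (nhds 1))
    {w θ : ℝ} (hw : 0 < w) (hθ : 1 < θ) {M : ℕ} (hM : 0 < M) {m x y : ℕ → ℕ}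
    (hxm : ∀ k, x k = a (m k)) (hm1 : ∀ k, 1 ≤ m k) (hm : StrictMono m)
    (hxy : ∀ k, x k ≤ y k) (hyx : ∀ k, y k + 2 * M ≤ x (k + 1))
    (hL : Monotone fun k => y k - x k)
    (hX : Tendsto (fun k => (x k : ℝ)) atTop atTop)
    (hR : Tendsto (fun k => (x (k + 1) : ℝ) / x k) atTop (nhds θ))
    (hY : Tendsto (fun k => ((y k : ℝ) - x k) / x k) atTop (nhds (θ * w))) (u : ℕ → Fin b) :
    vhatbA b a (Real.ofDigits (fill hb x y M u)) = (w : EReal) ∧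
      vbA b a (Real.ofDigits (fill hb x y M u)) = ((θ * w : ℝ) : EReal) := by
  have hb1 : (1 : ℝ) < b := by exact_mod_cast (by omega : 1 < b)
  have hb0 : (0 : ℝ) < b := by linarith
  set ξ := Real.ofDigits (fill hb x y M u)
  have hinv : ∀ j : ℕ, ((b : ℝ) ^ j)⁻¹ = (b : ℝ) ^ (-(j : ℝ)) := fun j => by
    rw [Real.rpow_neg hb0.le, Real.rpow_natCast]
  have hLr : ∀ k, ((y k - x k : ℕ) : ℝ) = (y k : ℝ) - x k := fun k => Nat.cast_sub (hxy k)
  have hXpos : ∀ᶠ k in atTop, (0 : ℝ) < x k := hX.eventually_gt_atTop 0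
  have hc0 : ∀ c : ℝ, Tendsto (fun k => c / (x k : ℝ)) atTop (nhds 0) :=
    fun c => hX.const_div_atTop c
  have hup : ∀ k, dni ((b : ℝ) ^ (x k) * ξ) ≤ (b : ℝ) ^ (-((y k : ℝ) - x k)) := fun k => by
    rw [← hLr, ← hinv]; exact dni_fill_le hb u k
  have hsmx : StrictMono x := strictMono_nat_of_lt_succ fun k => by
    have := hxy k; have := hyx k; omega
  have hsmy : StrictMono y := strictMono_nat_of_lt_succ fun k => by
    have := hxy (k + 1); have := hyx k; omega
  have hbetween : ∀ (f : ℕ → ℕ), StrictMono f → ∀ n, f 0 ≤ n → ∃ k, f k ≤ n ∧ n < f (k + 1) := by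
    intro f hf n hn
    have hex : ∃ k, n < f (k + 1) := ⟨n, Nat.lt_of_lt_of_le (Nat.lt_succ_self n) hf.le_apply⟩
    have hs := Nat.find_spec hex
    have hm : ∀ j, j < Nat.find hex → _ := fun j hj => Nat.find_min hex hj
    set k := Nat.find hex
    refine ⟨k, ?_, hs⟩
    rcases Nat.eq_zero_or_pos k with h0 | h0
    · rwa [h0]
    · have := hm (k - 1) (by omega)
      rw [Nat.sub_add_cancel h0] at this
      omega
  constructor
  · refine sSup_coe_eq hw ?_ ?_
    · rintro v ⟨hv0, hv⟩
      by_contra! hwv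
      obtain ⟨g, hg1, hg2, hg3⟩ := exists_largest_term a ha hη
      -- test the uniform exponent at the last index `N` with `a N ≤ x (k + 1) - 2 * M`
      set t : ℕ → ℝ := fun k => (x (k + 1) : ℝ) - 2 * M with ht
      have hX1 : Tendsto (fun k => (x (k + 1) : ℝ)) atTop atTop := hX.comp (tendsto_add_atTop_nat 1)
      have htt : Tendsto t atTop atTop := by
        simpa [ht, sub_eq_add_neg] using tendsto_atTop_add_const_right _ (-(2 * (M : ℝ))) hX1
      have e1 : Tendsto (fun k => (a (g (t k)) : ℝ) / x k) atTop (nhds θ) := by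
        have h1 : Tendsto (fun k => t k / x k) atTop (nhds θ) := by
          simpa [ht, sub_div] using hR.sub (hc0 (2 * M))
        have h2 := (hg3.comp htt).mul h1
        rw [one_mul] at h2
        refine h2.congr' ?_
        filter_upwards [htt.eventually_gt_atTop 0] with k hk
        exact div_mul_div_cancel₀ hk.ne'
      have e2 : Tendsto (fun k => v * ((a (g (t k)) : ℝ) / x k) - ((y k : ℝ) - x k) / x k
          - ((y 0 + 4 * M : ℕ) : ℝ) / x k) atTop (nhds (v * θ - θ * w - 0)) :=
        ((e1.const_mul v).sub hY).sub (hc0 _)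
      have e3 := e2.eventually_const_lt (u := 0) (by nlinarith)
      obtain ⟨k, ⟨hk, hk0, hkx⟩, n, -, hn, hlt⟩ := ((e3.and (hXpos.and
        (htt.eventually_ge_atTop (a 0 : ℝ)))).and ((hg2.comp htt).eventually hv)).exists
      have hat := hg1 _ hkx
      have han : a n ≤ a (g (t k)) := ha.monotone hn
      have han2 : a n + 2 * M ≤ x (k + 1) := by
        have : (a n : ℝ) ≤ a (g (t k)) := by exact_mod_cast han
        have : (a n : ℝ) + 2 * M ≤ x (k + 1) := by simp only [ht] at hat; linarith
        exact_mod_cast this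
      have hlow := le_dni_fill_of_le hb hxy hyx hM hL u k (a n) han2
      rw [hinv] at hlow
      have := (Real.rpow_lt_rpow_left_iff hb1).1 (hlow.trans_lt hlt)
      push_cast [hLr] at this
      rw [← mul_div_assoc, ← sub_div, ← sub_div, lt_div_iff₀ hk0] at hk
      push_cast at hk
      simp only [Function.comp] at this
      nlinarith
    · intro v hv0 hvw
      refine ⟨hv0, ?_⟩
      have e2 : Tendsto (fun k => ((y k : ℝ) - x k) / x k - v * ((x (k + 1) : ℝ) / x k)) atTop
          (nhds (θ * w - v * θ)) := hY.sub (hR.const_mul v)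
      have e3 := e2.eventually_const_lt (u := 0) (by nlinarith)
      obtain ⟨K, hK⟩ := eventually_atTop.1 (e3.and hXpos)
      filter_upwards [eventually_ge_atTop (m K), eventually_ge_atTop (m 0)] with N hN hN0
      obtain ⟨k, hk1, hk2⟩ := hbetween m hm N hN0
      have hKk : K ≤ k := Nat.lt_succ_iff.1 (hm.lt_iff_lt.1 (hN.trans_lt hk2))
      obtain ⟨h1, h2⟩ := hK k hKk
      rw [← mul_div_assoc, ← sub_div, lt_div_iff₀ h2] at h1
      refine ⟨m k, hm1 k, hk1, ?_⟩
      rw [← hxm]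
      refine (hup k).trans_lt ((Real.rpow_lt_rpow_left_iff hb1).2 ?_)
      have : (a N : ℝ) ≤ x (k + 1) := by rw [hxm]; exact_mod_cast ha.monotone hk2.le
      nlinarith
  · refine sSup_coe_eq (by positivity) ?_ ?_
    · rintro v ⟨hv0, hv⟩
      by_contra! hwv
      refine hv ?_
      have e2 : Tendsto (fun k => v - ((y k : ℝ) - x k) / x k - (4 * M + 2 * M * v) / x k) atTop
          (nhds (v - θ * w - 0)) := (tendsto_const_nhds.sub hY).sub (hc0 _)
      have e3 := e2.eventually_const_lt (u := 0) (by linarith)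
      obtain ⟨K, hK⟩ := eventually_atTop.1 (e3.and hXpos)
      have hvpos : 0 < v := lt_trans (by positivity) hwv
      have haT : Tendsto (fun n => (a n : ℝ)) atTop atTop :=
        tendsto_natCast_atTop_atTop.comp ha.tendsto_atTop
      filter_upwards [ha.tendsto_atTop.eventually_ge_atTop (y K),
        ha.tendsto_atTop.eventually_ge_atTop (y 0),
        haT.eventually_ge_atTop (2 * M / v)] with n hn hn0 hnv
      rintro ⟨-, hlt⟩
      rw [div_le_iff₀ hvpos] at hnv
      obtain ⟨k, hk1, hk2⟩ := hbetween y hsmy (a n) hn0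
      have hKk : K ≤ k := Nat.lt_succ_iff.1 (hsmy.lt_iff_lt.1 (hn.trans_lt hk2))
      obtain ⟨h1, h2⟩ := hK (k + 1) (by omega)
      have h1' : (y (k + 1) : ℝ) - x (k + 1) + (4 * M + 2 * M * v) < v * x (k + 1) := by
        have : v - ((y (k + 1) : ℝ) - x (k + 1)) / x (k + 1) - (4 * M + 2 * M * v) / x (k + 1) =
          (v * x (k + 1) - ((y (k + 1) : ℝ) - x (k + 1)) - (4 * M + 2 * M * v)) / x (k + 1) := by
          field_simp
        rw [this, lt_div_iff₀ h2] at h1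
        linarith
      rcases le_or_gt (a n + 2 * M) (x (k + 1)) with h | h
      · have hlow := le_dni_fill' hb hxy hyx hM u hk1 h
        rw [hinv] at hlow
        have := (Real.rpow_lt_rpow_left_iff hb1).1 (hlow.trans_lt hlt)
        push_cast at this
        linarith
      · have hlow := le_dni_fill hb hxy hyx hM u hk2.le
        rw [hinv, Nat.cast_sub (by omega)] at hlow
        have := (Real.rpow_lt_rpow_left_iff hb1).1 (hlow.trans_lt hlt)
        push_cast at this
        have h' : (x (k + 1) : ℝ) < a n + 2 * M := by exact_mod_cast h
        nlinarith
    · intro v hv0 hvw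
      refine ⟨hv0, ?_⟩
      have e3 := hY.eventually_const_lt hvw
      refine hm.tendsto_atTop.frequently (Eventually.frequently ?_)
      filter_upwards [e3, hXpos] with k h1 h2
      refine ⟨hm1 k, ?_⟩
      rw [← hxm]
      refine (hup k).trans_lt ((Real.rpow_lt_rpow_left_iff hb1).2 ?_)
      rw [lt_div_iff₀ h2] at h1
      linarith

/-- Blocks `[x k, y k)` that begin at terms `x k = a (m k)` close to `θ ^ k` and are so far apart
that the free places have the density required by `count_free_linear`. -/
lemma exists_blocks (a : ℕ → ℕ) (ha : StrictMono a) (hpos : ∀ n, 1 ≤ a n)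
    (hη : Tendsto (fun n => (a (n + 1) : ℝ) / (a n : ℝ)) atTop (nhds 1))
    {w θ : ℝ} (hw : 0 < w) (hθ : 1 < θ) (hwθ : 1 + θ * w < θ) {M : ℕ} (hM : 0 < M) {s σ : ℝ}
    (hs : 0 ≤ s) (hsσ : s * (1 + θ * w) ≤ σ)
    (hσ : σ * (θ - 1) < (1 - 1 / M) * (θ - 1 - θ * w)) :
    ∃ m x y : ℕ → ℕ, (∀ k, x k = a (m k)) ∧ (∀ k, 1 ≤ m k) ∧ StrictMono m ∧
      (∀ k, x k ≤ y k) ∧ (∀ k, y k + 2 * M ≤ x (k + 1)) ∧ (Monotone fun k => y k - x k) ∧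
      Tendsto (fun k => (x k : ℝ)) atTop atTop ∧
      Tendsto (fun k => (x (k + 1) : ℝ) / x k) atTop (nhds θ) ∧
      Tendsto (fun k => ((y k : ℝ) - x k) / x k) atTop (nhds (θ * w)) ∧
      (∀ k, σ * ((x (k + 1) : ℝ) - x k) + 1 ≤ (1 - 1 / M) * (x (k + 1) - y k)) ∧
      ∀ k, s * (y k : ℝ) ≤ σ * x k := by
  obtain ⟨g, hg1, hg2, hg3⟩ := exists_largest_term a ha hη
  have hθ0 : 0 < θ := by linarith
  have hpow : Tendsto (fun k : ℕ => θ ^ k) atTop atTop := tendsto_pow_atTop_atTop_of_one_lt hθ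
  set m : ℕ → ℕ := fun k => g (θ ^ k) with hm
  have hmT : Tendsto m atTop atTop := hg2.comp hpow
  have hX : Tendsto (fun k => (a (m k) : ℝ)) atTop atTop :=
    tendsto_natCast_atTop_atTop.comp (ha.tendsto_atTop.comp hmT)
  have hpos' : ∀ n, (0 : ℝ) < a n := fun n => by exact_mod_cast hpos n
  have h1 : Tendsto (fun k => (a (m k) : ℝ) / θ ^ k) atTop (nhds 1) := hg3.comp hpow
  have hR : Tendsto (fun k => (a (m (k + 1)) : ℝ) / a (m k)) atTop (nhds θ) := by
    have h2 := ((h1.comp (tendsto_add_atTop_nat 1)).div h1 one_ne_zero).const_mul θ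
    rw [div_one, mul_one] at h2
    refine h2.congr fun k => ?_
    have := (hpos' (m k)).ne'
    change θ * ((a (m (k + 1)) / θ ^ (k + 1)) / (a (m k) / θ ^ k)) = _
    rw [pow_succ]
    field_simp
  set y : ℕ → ℕ := fun k => a (m k) + ⌊θ * w * a (m k)⌋₊ with hy
  have hθw : 0 ≤ θ * w := by positivity
  have hyle : ∀ k, (y k : ℝ) ≤ (1 + θ * w) * a (m k) := fun k => by
    have := Nat.floor_le (mul_nonneg hθw (hpos' (m k)).le)
    simp only [hy]; push_cast; linarith
  have hYT : Tendsto (fun k => ((y k : ℝ) - a (m k)) / a (m k)) atTop (nhds (θ * w)) := by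
    have := (tendsto_nat_floor_mul_div_atTop hθw).comp hX
    refine this.congr fun k => ?_
    simp [hy]
  have hc0 : ∀ c : ℝ, Tendsto (fun k => c / (a (m k) : ℝ)) atTop (nhds 0) :=
    fun c => hX.const_div_atTop c
  have E1 : ∀ᶠ k in atTop, y k + 2 * M ≤ a (m (k + 1)) := by
    have e := ((hR.sub_const (1 + θ * w)).sub (hc0 (2 * M))).eventually_const_lt (u := 0)
      (by linarith)
    filter_upwards [e] with k hk
    have : (a (m (k + 1)) : ℝ) / a (m k) - (1 + θ * w) - 2 * M / a (m k) =
        (a (m (k + 1)) - (1 + θ * w) * a (m k) - 2 * M) / a (m k) := by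
      have := (hpos' (m k)).ne'
      field_simp
    rw [this, lt_div_iff₀ (hpos' _), zero_mul] at hk
    have := hyle k
    have : (y k : ℝ) + 2 * M ≤ a (m (k + 1)) := by linarith
    exact_mod_cast this
  have hμ : (0 : ℝ) ≤ 1 - 1 / M := by
    have : (1 : ℝ) ≤ M := by exact_mod_cast hM
    rw [sub_nonneg]
    exact div_le_one_of_le₀ this (by linarith)
  have E2 : ∀ᶠ k in atTop, σ * ((a (m (k + 1)) : ℝ) - a (m k)) + 1 ≤
      (1 - 1 / M) * (a (m (k + 1)) - y k) := by
    have e := ((((hR.sub_const (1 + θ * w)).const_mul (1 - 1 / (M : ℝ))).sub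
      ((hR.sub_const 1).const_mul σ)).sub (hc0 1)).eventually_const_lt (u := 0) (by linarith)
    filter_upwards [e] with k hk
    have : (1 - 1 / (M : ℝ)) * ((a (m (k + 1)) : ℝ) / a (m k) - (1 + θ * w)) -
        σ * ((a (m (k + 1)) : ℝ) / a (m k) - 1) - 1 / a (m k) =
        ((1 - 1 / (M : ℝ)) * (a (m (k + 1)) - (1 + θ * w) * a (m k)) -
          σ * (a (m (k + 1)) - a (m k)) - 1) / a (m k) := by
      have := (hpos' (m k)).ne'
      generalize 1 - 1 / (M : ℝ) = μ
      field_simp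
    rw [this, lt_div_iff₀ (hpos' _), zero_mul] at hk
    have := mul_le_mul_of_nonneg_left (hyle k) hμ
    linarith
  obtain ⟨k₀, hk₀⟩ := eventually_atTop.1 (E1.and (E2.and (hmT.eventually_ge_atTop 1)))
  have hxy : ∀ k, a (m k) ≤ y k := fun k => Nat.le_add_right _ _
  have hsm : StrictMono fun k => m (k + k₀) := strictMono_nat_of_lt_succ fun k => by
    have e1 := (hk₀ (k + k₀) (by omega)).1
    have e2 := hxy (k + k₀)
    rw [show k + 1 + k₀ = k + k₀ + 1 by omega]
    exact ha.lt_iff_lt.1 (by omega)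
  refine ⟨fun k => m (k + k₀), fun k => a (m (k + k₀)), fun k => y (k + k₀), fun _ => rfl,
    fun k => (hk₀ _ (by omega)).2.2, hsm, fun k => hxy _, fun k => ?_, ?_,
    hX.comp (tendsto_add_atTop_nat k₀), ?_, hYT.comp (tendsto_add_atTop_nat k₀), fun k => ?_,
    fun k => ?_⟩
  · beta_reduce
    rw [show k + 1 + k₀ = k + k₀ + 1 by omega]
    exact (hk₀ _ (by omega)).1
  · intro i j hij
    simp only [hy, Nat.add_sub_cancel_left]
    have : a (m (i + k₀)) ≤ a (m (j + k₀)) := ha.monotone (hsm.monotone hij)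
    gcongr
  · refine (hR.comp (tendsto_add_atTop_nat k₀)).congr fun k => ?_
    simp only [Function.comp]
    rw [show k + 1 + k₀ = k + k₀ + 1 by omega]
  · beta_reduce
    rw [show k + 1 + k₀ = k + k₀ + 1 by omega]
    exact (hk₀ _ (by omega)).2.1
  · have e1 := mul_le_mul_of_nonneg_left (hyle (k + k₀)) hs
    have e2 := mul_le_mul_of_nonneg_right hsσ (hpos' (m (k + k₀))).le
    change s * (y (k + k₀) : ℝ) ≤ σ * a (m (k + k₀))
    linarith

/-! ### The lower bound -/

/-- Fill in digits around blocks as in `exists_blocks`, and let the density of the free digits tend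
to the critical one. -/
lemma dimH_lower (b : ℕ) (hb : 2 ≤ b) (a : ℕ → ℕ) (ha : StrictMono a) (hpos : ∀ n, 1 ≤ a n)
    (hη : Tendsto (fun n => (a (n + 1) : ℝ) / (a n : ℝ)) atTop (nhds 1))
    (w : ℝ) (hw : w ∈ Set.Ioo (0 : ℝ) 1) (θ : ℝ) (hθ : 1 / (1 - w) ≤ θ) :
    ENNReal.ofReal ((θ - 1 - θ * w) / ((θ - 1) * (1 + θ * w))) ≤
      dimH {ξ : ℝ | vhatbA b a ξ = (w : EReal) ∧ vbA b a ξ = ((θ * w : ℝ) : EReal)} := by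
  obtain ⟨hw0, hw1⟩ := hw
  have hθ1 : 1 < θ := lt_of_lt_of_le (by rw [lt_div_iff₀ (by linarith)]; linarith) hθ
  have hge : 0 ≤ θ - 1 - θ * w := by
    rw [div_le_iff₀ (by linarith)] at hθ
    linarith
  have hθw : 0 < θ * w := by positivity
  set D := dimH {ξ : ℝ | vhatbA b a ξ = (w : EReal) ∧ vbA b a ξ = ((θ * w : ℝ) : EReal)}
  rcases hge.eq_or_lt with h0 | hgt
  · rw [← h0, zero_div, ENNReal.ofReal_zero]
    exact zero_le
  set ρ := (θ - 1 - θ * w) / (θ - 1) with hρ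
  have hρ0 : 0 < ρ := div_pos hgt (by linarith)
  have hρθ : ρ * (θ - 1) = θ - 1 - θ * w := div_mul_cancel₀ _ (by linarith)
  have hT : (θ - 1 - θ * w) / ((θ - 1) * (1 + θ * w)) = ρ / (1 + θ * w) := by rw [hρ, div_div]
  rw [hT]
  refine le_of_forall_lt fun e he => ?_
  obtain ⟨r, -, her, hr⟩ := ENNReal.lt_iff_exists_real_btwn.1 he
  have hTpos : 0 < ρ / (1 + θ * w) := by positivity
  obtain ⟨s, hrs, hsT⟩ := exists_between (max_lt ((ENNReal.ofReal_lt_ofReal_iff hTpos).1 hr) hTpos)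
  have hs0 : 0 < s := (le_max_right _ _).trans_lt hrs
  have hes : e < ENNReal.ofReal s :=
    her.trans_le (ENNReal.ofReal_le_ofReal ((le_max_left _ _).trans hrs.le))
  refine hes.trans_le ?_
  rw [lt_div_iff₀ (by positivity)] at hsT
  -- densities `s * (1 + θ * w) < (1 - 1 / M) * ρ < ρ`
  obtain ⟨M, hM⟩ := exists_nat_gt (ρ / (ρ - s * (1 + θ * w)))
  have hgap : 0 < ρ - s * (1 + θ * w) := by linarith
  have hM0 : (0 : ℝ) < M := lt_trans (by positivity) hM
  have hσ : s * (1 + θ * w) < (1 - 1 / M) * ρ := by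
    rw [div_lt_iff₀ hgap] at hM
    have : ρ / M < ρ - s * (1 + θ * w) := by rw [div_lt_iff₀ hM0]; linarith
    have : (1 - 1 / (M : ℝ)) * ρ = ρ - ρ / M := by ring
    linarith
  have hMn : 0 < M := by exact_mod_cast hM0
  have hsM : s ≤ 1 - 1 / M := by
    have h1 : ρ ≤ 1 := div_le_one_of_le₀ (by linarith) (by linarith)
    nlinarith
  obtain ⟨m, x, y, hxm, hm1, hm, hxy, hyx, hL, hX, hR, hY, H1, H2⟩ :=
    exists_blocks a ha hpos hη hw0 hθ1 (by linarith) hMn hs0.le le_rfl (by rw [← hρθ]; nlinarith)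
  have := Fact.mk hb
  refine (le_dimH_range_fill hb hMn s _ hs0 fun n =>
    count_free_linear hxy hyx hMn s _ hs0.le hsM H1 H2 n).trans (dimH_mono ?_)
  rintro _ ⟨u, rfl⟩
  exact exponents_fill hb a ha hη hw0 hθ1 hMn hxm hm1 hm hxy hyx hL hX hR hY u

theorem stmt8 (b : ℕ) (hb : 2 ≤ b) (a : ℕ → ℕ) (ha : StrictMono a)
    (hpos : ∀ n, 1 ≤ a n)
    (hη : Tendsto (fun n => (a (n + 1) : ℝ) / (a n : ℝ)) atTop (nhds 1))
    (w : ℝ) (hw : w ∈ Set.Ioo (0 : ℝ) 1) (θ : ℝ) (hθ : 1 / (1 - w) ≤ θ) :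
    dimH {ξ : ℝ | vhatbA b a ξ = (w : EReal) ∧ vbA b a ξ = ((θ * w : ℝ) : EReal)} =
      ENNReal.ofReal ((θ - 1 - θ * w) / ((θ - 1) * (1 + θ * w))) :=
  le_antisymm (dimH_upper b hb a ha hpos hη w hw θ hθ) (dimH_lower b hb a ha hpos hη w hw θ hθ)
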